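/- arXiv:1311.5392 — 5 statements merged into one kernel-verified Lean document; each statement's English description precedes it below -/
import Mathlib

section
/- The map Φ(A,B) = ( 𝓘₀²(A,B), 𝓘₁²(A,B)/𝓘₀²(A,B) ), defined for A ∈ ℝ and B ≥ 0, is a bijection from ℝ × [0,∞) onto (0,∞) × [0,1); moreover Φ is continuously differentiable (one-sidedly at B = 0), and its restriction to the open half-plane ℝ × (0,∞) is a C¹ diffeomorphism onto (0,∞) × (0,1). -/
open MeasureTheory Set

/-- The Fermi integral of order `s`: `φ_s(x) = (1/Γ(s)) ∫₀^∞ t^{s-1}/(e^{t-x}+1) dt`. -/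
noncomputable def fermi (s x : ℝ) : ℝ :=
  (1 / Real.Gamma s) * ∫ t in Set.Ioi (0 : ℝ), t ^ (s - 1) / (Real.exp (t - x) + 1)

/-- `𝓘_N^s(A,B) = (1/π) ∫₀^π cos(Nθ) φ_s(A + B cos θ) dθ`. -/
noncomputable def calI (N : ℕ) (s A B : ℝ) : ℝ :=
  (1 / Real.pi) * ∫ θ in (0 : ℝ)..Real.pi, Real.cos (N * θ) * fermi s (A + B * Real.cos θ)

/-- The map `Φ(A,B) = (𝓘₀²(A,B), 𝓘₁²(A,B)/𝓘₀²(A,B))`. -/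
noncomputable def Phi (x : ℝ × ℝ) : ℝ × ℝ :=
  (calI 0 2 x.1 x.2, calI 1 2 x.1 x.2 / calI 0 2 x.1 x.2)


lemma tint : IntegrableOn (fun t : ℝ => t * Real.exp (-t)) (Ioi 0) := by
  have h := Real.GammaIntegral_convergent (s := 2) (by norm_num)
  refine h.congr_fun (fun t _ => ?_) measurableSet_Ioi
  have : (2:ℝ) - 1 = 1 := by norm_num
  simp only [this, Real.rpow_one]
  ring

lemma fermi_eq (x : ℝ) : fermi 2 x = ∫ t in Ioi (0:ℝ), t / (Real.exp (t - x) + 1) := by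
  unfold fermi
  have : (2:ℝ) - 1 = 1 := by norm_num
  simp only [this, Real.rpow_one, Real.Gamma_two]
  simp

lemma cont1 (x : ℝ) : Continuous (fun t : ℝ => t / (Real.exp (t - x) + 1)) :=
  Continuous.div (by fun_prop) (by fun_prop) (fun t => by positivity)

lemma bound1 (x t : ℝ) (ht : 0 < t) :
    t / (Real.exp (t - x) + 1) ≤ Real.exp x * (t * Real.exp (-t)) := by
  rw [div_le_iff₀ (by positivity)]
  have h : Real.exp x * Real.exp (-t) * Real.exp (t - x) = 1 := by
    rw [← Real.exp_add, ← Real.exp_add, show x + -t + (t - x) = 0 by ring, Real.exp_zero]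
  have : Real.exp x * (t * Real.exp (-t)) * (Real.exp (t - x) + 1)
    = t * (Real.exp x * Real.exp (-t) * Real.exp (t - x)) + Real.exp x * (t * Real.exp (-t)) := by ring
  rw [this, h]
  have : 0 < Real.exp x * (t * Real.exp (-t)) := by positivity
  linarith

lemma int1 (x : ℝ) : IntegrableOn (fun t : ℝ => t / (Real.exp (t - x) + 1)) (Ioi 0) := by
  refine Integrable.mono' (tint.const_mul (Real.exp x)) (cont1 x).aestronglyMeasurable ?_
  filter_upwards [ae_restrict_mem measurableSet_Ioi] with t ht
  have ht : 0 < t := ht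
  rw [Real.norm_of_nonneg (by positivity)]
  exact bound1 x t ht

noncomputable def dF (x : ℝ) : ℝ :=
  ∫ t in Ioi (0:ℝ), t * Real.exp (t - x) / (Real.exp (t - x) + 1) ^ 2

lemma cont2 (x : ℝ) : Continuous (fun t : ℝ => t * Real.exp (t - x) / (Real.exp (t - x) + 1) ^ 2) :=
  Continuous.div (by fun_prop) (by fun_prop) (fun t => by positivity)

lemma bound2 (x y t : ℝ) (ht : 0 < t) (hy : x < y) :
    ‖t * Real.exp (t - x) / (Real.exp (t - x) + 1) ^ 2‖ ≤ Real.exp y * (t * Real.exp (-t)) := by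
  rw [Real.norm_of_nonneg (by positivity)]
  have h1 : t * Real.exp (t - x) / (Real.exp (t - x) + 1) ^ 2 ≤ t / (Real.exp (t - x) + 1) := by
    rw [div_le_div_iff₀ (by positivity) (by positivity)]
    have : 0 < Real.exp (t - x) := Real.exp_pos _
    have : 0 < t * (Real.exp (t - x) + 1) := by positivity
    nlinarith
  refine h1.trans ((bound1 x t ht).trans ?_)
  gcongr

lemma fermi_hasDerivAt_aux (x : ℝ) :
    Integrable (fun t : ℝ => t * Real.exp (t - x) / (Real.exp (t - x) + 1) ^ 2)
      (volume.restrict (Ioi 0)) ∧ HasDerivAt (fermi 2) (dF x) x := by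
  have e : fermi 2 = fun x => ∫ t in Ioi (0:ℝ), t / (Real.exp (t - x) + 1) := funext fermi_eq
  rw [e]
  refine hasDerivAt_integral_of_dominated_loc_of_deriv_le (s := Iio (x+1))
    (F := fun x t => t / (Real.exp (t - x) + 1))
    (F' := fun x t => t * Real.exp (t - x) / (Real.exp (t - x) + 1) ^ 2)
    (bound := fun t => Real.exp (x+1) * (t * Real.exp (-t)))
    (Iio_mem_nhds (by linarith)) (Filter.Eventually.of_forall fun y => (cont1 y).aestronglyMeasurable)
    (int1 x) (cont2 x).aestronglyMeasurable ?_ (tint.const_mul _) ?_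
  · filter_upwards [ae_restrict_mem measurableSet_Ioi] with t ht y hy
    exact bound2 y (x+1) t ht hy
  · filter_upwards with t y _
    have h : HasDerivAt (fun y => Real.exp (t - y) + 1) (Real.exp (t - y) * (-1)) y := by
      simpa using (((hasDerivAt_id y).const_sub t).exp.add_const 1)
    have h2 := (hasDerivAt_const y t).fun_div h (by positivity)
    refine h2.congr_deriv ?_
    congr 1
    ring

lemma fermi_hasDerivAt (x : ℝ) : HasDerivAt (fermi 2) (dF x) x := (fermi_hasDerivAt_aux x).2

lemma dF_cont : Continuous dF := by
  rw [continuous_iff_continuousAt]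
  intro x
  refine continuousAt_of_dominated (F := fun x t => t * Real.exp (t - x) / (Real.exp (t - x) + 1) ^ 2)
    (bound := fun t => Real.exp (x+1) * (t * Real.exp (-t)))
    (Filter.Eventually.of_forall fun y => (cont2 y).aestronglyMeasurable) ?_ (tint.const_mul _) ?_
  · filter_upwards [Iio_mem_nhds (show x < x + 1 by linarith)] with y hy
    filter_upwards [ae_restrict_mem measurableSet_Ioi] with t ht
    exact bound2 y (x+1) t ht hy
  · filter_upwards with t
    exact (Continuous.div (by fun_prop) (by fun_prop) (fun t => by positivity)).continuousAt

lemma pos_aux (f : ℝ → ℝ) (hf : IntegrableOn f (Ioi 0)) (hp : ∀ t, 0 < t → 0 < f t) :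
    0 < ∫ t in Ioi (0:ℝ), f t := by
  rw [setIntegral_pos_iff_support_of_nonneg_ae ?_ hf]
  · have : Function.support f ∩ Ioi 0 = Ioi 0 := by
      apply inter_eq_right.2
      intro t ht
      exact (hp t ht).ne'
    rw [this]; simp
  · filter_upwards [ae_restrict_mem measurableSet_Ioi] with t ht
    exact (hp t ht).le

lemma dF_pos (x : ℝ) : 0 < dF x :=
  pos_aux _ (fermi_hasDerivAt_aux x).1 (fun t ht => by positivity)

lemma F_pos (x : ℝ) : 0 < fermi 2 x := by
  rw [fermi_eq]
  exact pos_aux _ (int1 x) (fun t ht => by positivity)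

lemma F_cont : Continuous (fermi 2) :=
  continuous_iff_continuousAt.2 fun x => (fermi_hasDerivAt x).continuousAt

lemma F_mono : StrictMono (fermi 2) :=
  strictMono_of_deriv_pos fun x => by rw [(fermi_hasDerivAt x).deriv]; exact dF_pos x

lemma F_le_exp (x : ℝ) : fermi 2 x ≤ Real.exp x := by
  rw [fermi_eq]
  have h1 : ∫ t in Ioi (0:ℝ), t / (Real.exp (t - x) + 1) ≤
      ∫ t in Ioi (0:ℝ), Real.exp x * (t * Real.exp (-t)) :=
    setIntegral_mono_on (int1 x) (tint.const_mul _) measurableSet_Ioi (fun t ht => bound1 x t ht)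
  refine h1.trans (le_of_eq ?_)
  rw [integral_const_mul]
  have : ∫ t in Ioi (0:ℝ), t * Real.exp (-t) = 1 := by
    rw [← Real.Gamma_two, Real.Gamma_eq_integral (by norm_num)]
    refine setIntegral_congr_fun measurableSet_Ioi (fun t _ => ?_)
    have : (2:ℝ) - 1 = 1 := by norm_num
    simp only [this, Real.rpow_one]
    ring
  rw [this, mul_one]

lemma F_ge (x : ℝ) (hx : 0 ≤ x) : x ^ 2 / 4 ≤ fermi 2 x := by
  rw [fermi_eq]
  have h1 : ∫ t in Ioc (0:ℝ) x, t / (Real.exp (t - x) + 1) ≤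
      ∫ t in Ioi (0:ℝ), t / (Real.exp (t - x) + 1) := by
    refine setIntegral_mono_set (int1 x) ?_ (Ioc_subset_Ioi_self.eventuallyLE)
    filter_upwards [ae_restrict_mem measurableSet_Ioi] with t ht
    have ht : 0 < t := ht
    show 0 ≤ t / (Real.exp (t - x) + 1)
    positivity
  refine le_trans ?_ h1
  have h2 : ∫ t in Ioc (0:ℝ) x, t / 2 ≤ ∫ t in Ioc (0:ℝ) x, t / (Real.exp (t - x) + 1) := by
    refine setIntegral_mono_on ?_ ((int1 x).mono_set Ioc_subset_Ioi_self) measurableSet_Ioc ?_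
    · exact (Continuous.integrableOn_Ioc (by fun_prop))
    · intro t ht
      have : Real.exp (t - x) ≤ 1 := Real.exp_le_one_iff.2 (by linarith [ht.2])
      have := ht.1
      gcongr
      linarith
  refine le_trans (le_of_eq ?_) h2
  rw [← intervalIntegral.integral_of_le hx]
  simp
  ring

noncomputable def KK (w : ℝ → ℝ) (p : ℝ × ℝ) : ℝ :=
  ∫ θ in (0:ℝ)..Real.pi, w θ * fermi 2 (p.1 + p.2 * Real.cos θ)

noncomputable def DK (w : ℝ → ℝ) (p : ℝ × ℝ) (θ : ℝ) : ℝ × ℝ →L[ℝ] ℝ :=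
  (w θ * dF (p.1 + p.2 * Real.cos θ)) •
    (ContinuousLinearMap.fst ℝ ℝ ℝ + Real.cos θ • ContinuousLinearMap.snd ℝ ℝ ℝ)

lemma DK_cont (w : ℝ → ℝ) (hw : Continuous w) :
    Continuous (fun q : (ℝ × ℝ) × ℝ => DK w q.1 q.2) := by
  unfold DK
  have := dF_cont
  fun_prop

lemma KK_integrand_cont (w : ℝ → ℝ) (hw : Continuous w) (p : ℝ × ℝ) :
    Continuous (fun θ => w θ * fermi 2 (p.1 + p.2 * Real.cos θ)) := by
  have := F_cont
  fun_prop

lemma DK_bound (w : ℝ → ℝ) (hw : Continuous w) (p : ℝ × ℝ) :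
    ∃ C : ℝ, ∀ θ ∈ Icc 0 Real.pi, ∀ q ∈ Metric.closedBall p 1, ‖DK w q θ‖ ≤ C := by
  obtain ⟨C, hC⟩ := ((isCompact_closedBall p 1).prod
    (isCompact_Icc (a := (0:ℝ)) (b := Real.pi))).exists_bound_of_continuousOn
      (DK_cont w hw).continuousOn
  exact ⟨C, fun θ hθ q hq => hC (q, θ) ⟨hq, hθ⟩⟩

lemma DK_deriv (w : ℝ → ℝ) (q : ℝ × ℝ) (θ : ℝ) :
    HasFDerivAt (fun p : ℝ × ℝ => w θ * fermi 2 (p.1 + p.2 * Real.cos θ)) (DK w q θ) q := by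
  have h1 : HasFDerivAt (fun q : ℝ × ℝ => q.1 + q.2 * Real.cos θ)
    (ContinuousLinearMap.fst ℝ ℝ ℝ + Real.cos θ • ContinuousLinearMap.snd ℝ ℝ ℝ) q :=
    hasFDerivAt_fst.add (hasFDerivAt_snd.mul_const _)
  have h2 := ((fermi_hasDerivAt (q.1 + q.2 * Real.cos θ)).comp_hasFDerivAt q h1).const_mul (w θ)
  unfold DK
  rw [mul_smul]
  exact h2

lemma DK_cont_snd (w : ℝ → ℝ) (hw : Continuous w) (p : ℝ × ℝ) : Continuous (DK w p) :=
  (DK_cont w hw).comp (by fun_prop : Continuous fun θ : ℝ => (p, θ))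

lemma KK_hasFDerivAt (w : ℝ → ℝ) (hw : Continuous w) (p : ℝ × ℝ) :
    HasFDerivAt (KK w) (∫ θ in (0:ℝ)..Real.pi, DK w p θ) p := by
  obtain ⟨C, hC⟩ := DK_bound w hw p
  have e : KK w = fun p => ∫ θ in (0:ℝ)..Real.pi, w θ * fermi 2 (p.1 + p.2 * Real.cos θ) := rfl
  rw [e]
  have hb : ∀ᵐ θ ∂(volume : Measure ℝ), θ ∈ uIoc 0 Real.pi →
      ∀ q ∈ Metric.closedBall p 1, ‖DK w q θ‖ ≤ (fun _ => C) θ := by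
    refine Filter.Eventually.of_forall fun θ hθ q hq => ?_
    rw [uIoc_of_le Real.pi_pos.le] at hθ
    exact hC θ ⟨hθ.1.le, hθ.2⟩ q hq
  have hd : ∀ᵐ θ ∂(volume : Measure ℝ), θ ∈ uIoc 0 Real.pi →
      ∀ q ∈ Metric.closedBall p 1,
      HasFDerivAt (fun p : ℝ × ℝ => w θ * fermi 2 (p.1 + p.2 * Real.cos θ)) (DK w q θ) q :=
    Filter.Eventually.of_forall fun θ _ q _ => DK_deriv w q θ
  have hm : AEStronglyMeasurable (DK w p) (volume.restrict (uIoc 0 Real.pi)) :=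
    (DK_cont_snd w hw p).aestronglyMeasurable
  have hF : ∀ᶠ q in nhds p, AEStronglyMeasurable
      (fun θ => w θ * fermi 2 (q.1 + q.2 * Real.cos θ)) (volume.restrict (uIoc 0 Real.pi)) :=
    Filter.Eventually.of_forall fun q => (KK_integrand_cont w hw q).aestronglyMeasurable
  have hi : IntervalIntegrable (fun θ => w θ * fermi 2 (p.1 + p.2 * Real.cos θ)) volume 0 Real.pi :=
    (KK_integrand_cont w hw p).intervalIntegrable _ _
  exact intervalIntegral.hasFDerivAt_integral_of_dominated_of_fderiv_le
    (Metric.closedBall_mem_nhds p one_pos) hF hi hm hb intervalIntegrable_const hd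

lemma KK_contDiff (w : ℝ → ℝ) (hw : Continuous w) : ContDiff ℝ 1 (KK w) := by
  rw [contDiff_one_iff_hasFDerivAt]
  refine ⟨fun p => ∫ θ in (0:ℝ)..Real.pi, DK w p θ, ?_, KK_hasFDerivAt w hw⟩
  exact intervalIntegral.continuous_parametric_intervalIntegral_of_continuous' (DK_cont w hw) _ _

lemma DK_apply (w : ℝ → ℝ) (hw : Continuous w) (p v : ℝ × ℝ) :
    (∫ θ in (0:ℝ)..Real.pi, DK w p θ) v =
      ∫ θ in (0:ℝ)..Real.pi, w θ * dF (p.1 + p.2 * Real.cos θ) * (v.1 + Real.cos θ * v.2) := by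
  have hc : Continuous (DK w p) := (DK_cont w hw).comp (by fun_prop : Continuous fun θ : ℝ => (p, θ))
  rw [ContinuousLinearMap.intervalIntegral_apply (hc.intervalIntegrable _ _)]
  simp [DK, mul_add]

noncomputable def P0 : ℝ × ℝ → ℝ := KK (fun _ => 1)
noncomputable def P1 : ℝ × ℝ → ℝ := KK Real.cos
noncomputable def Psi (p : ℝ × ℝ) : ℝ × ℝ := (P0 p, P1 p)

lemma P0_contDiff : ContDiff ℝ 1 P0 := KK_contDiff _ (by fun_prop)
lemma P1_contDiff : ContDiff ℝ 1 P1 := KK_contDiff _ (by fun_prop)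
lemma Psi_contDiff : ContDiff ℝ 1 Psi := P0_contDiff.prodMk P1_contDiff

lemma endpoints (v : ℝ × ℝ) (h : ∀ θ ∈ Icc 0 Real.pi, v.1 + v.2 * Real.cos θ = 0) : v = 0 := by
  have h0 := h 0 ⟨le_rfl, Real.pi_pos.le⟩
  have h1 := h Real.pi ⟨Real.pi_pos.le, le_rfl⟩
  simp at h0 h1
  ext <;> simp <;> linarith

lemma Psi_deriv (p : ℝ × ℝ) : ∃ e : (ℝ × ℝ) ≃L[ℝ] (ℝ × ℝ),
    HasFDerivAt Psi (e : ℝ × ℝ →L[ℝ] ℝ × ℝ) p := by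
  have h := (KK_hasFDerivAt (fun _ => 1) (by fun_prop) p).prodMk
    (KK_hasFDerivAt Real.cos (by fun_prop) p)
  set L := (∫ θ in (0:ℝ)..Real.pi, DK (fun _ => 1) p θ).prod (∫ θ in (0:ℝ)..Real.pi, DK Real.cos p θ)
    with hL
  have inj : Function.Injective (L : ℝ × ℝ →ₗ[ℝ] ℝ × ℝ) := by
    rw [injective_iff_map_eq_zero]
    intro v hv
    have hv0 : (∫ θ in (0:ℝ)..Real.pi, DK (fun _ => 1) p θ) v = 0 := congrArg Prod.fst hv
    have hv1 : (∫ θ in (0:ℝ)..Real.pi, DK Real.cos p θ) v = 0 := congrArg Prod.snd hv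
    rw [DK_apply _ (by fun_prop)] at hv0 hv1
    by_contra hne
    have hF := dF_cont
    have hpos : 0 < ∫ θ in (0:ℝ)..Real.pi,
        dF (p.1 + p.2 * Real.cos θ) * (v.1 + v.2 * Real.cos θ) ^ 2 := by
      refine intervalIntegral.integral_pos Real.pi_pos (by fun_prop) ?_ ?_
      · intro θ _
        have := dF_pos (p.1 + p.2 * Real.cos θ)
        positivity
      · by_contra! hcon
        apply hne
        apply endpoints
        intro θ hθ
        by_contra h0
        have := dF_pos (p.1 + p.2 * Real.cos θ)
        have h2 := hcon θ hθ
        have : 0 < dF (p.1 + p.2 * Real.cos θ) * (v.1 + v.2 * Real.cos θ) ^ 2 := by positivity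
        linarith
    have heq : ∫ θ in (0:ℝ)..Real.pi,
        dF (p.1 + p.2 * Real.cos θ) * (v.1 + v.2 * Real.cos θ) ^ 2 =
        v.1 * (∫ θ in (0:ℝ)..Real.pi,
          1 * dF (p.1 + p.2 * Real.cos θ) * (v.1 + Real.cos θ * v.2)) +
        v.2 * (∫ θ in (0:ℝ)..Real.pi,
          Real.cos θ * dF (p.1 + p.2 * Real.cos θ) * (v.1 + Real.cos θ * v.2)) := by
      rw [← intervalIntegral.integral_const_mul, ← intervalIntegral.integral_const_mul,
        ← intervalIntegral.integral_add]
      · congr 1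
        ext θ
        ring
      · exact Continuous.intervalIntegrable (by fun_prop) _ _
      · exact Continuous.intervalIntegrable (by fun_prop) _ _
    rw [heq, hv0, hv1] at hpos
    simp at hpos
  refine ⟨(LinearEquiv.ofInjectiveEndo _ inj).toContinuousLinearEquiv, ?_⟩
  refine h.congr_fderiv ?_
  ext <;> rfl

lemma Psi_mono (p q : ℝ × ℝ) (hpq : p ≠ q) :
    0 < (P0 p - P0 q) * (p.1 - q.1) + (P1 p - P1 q) * (p.2 - q.2) := by
  have hF := F_cont
  have hpos : 0 < ∫ θ in (0:ℝ)..Real.pi,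
      (fermi 2 (p.1 + p.2 * Real.cos θ) - fermi 2 (q.1 + q.2 * Real.cos θ)) *
        ((p.1 + p.2 * Real.cos θ) - (q.1 + q.2 * Real.cos θ)) := by
    have key : ∀ u v : ℝ, 0 ≤ (fermi 2 u - fermi 2 v) * (u - v) := by
      intro u v
      rcases le_total u v with h | h
      · have := F_mono.monotone h
        nlinarith
      · have := F_mono.monotone h
        nlinarith
    refine intervalIntegral.integral_pos Real.pi_pos (by fun_prop) (fun θ _ => key _ _) ?_
    by_contra! hcon
    apply hpq
    rw [← sub_eq_zero]
    apply endpoints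
    intro θ hθ
    have h2 := hcon θ hθ
    have h3 := le_antisymm h2 (key _ _)
    rcases mul_eq_zero.1 h3 with h | h
    · have := F_mono.injective (sub_eq_zero.1 h)
      simp only [Prod.fst_sub, Prod.snd_sub]
      linarith
    · simp only [Prod.fst_sub, Prod.snd_sub]
      linarith
  refine hpos.trans_eq ?_
  unfold P0 P1 KK
  rw [← intervalIntegral.integral_sub, ← intervalIntegral.integral_sub,
    ← intervalIntegral.integral_mul_const, ← intervalIntegral.integral_mul_const,
    ← intervalIntegral.integral_add]
  · congr 1
    ext θ
    ring
  all_goals exact Continuous.intervalIntegrable (by fun_prop) _ _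

lemma Psi_inj : Function.Injective Psi := by
  intro p q h
  by_contra hne
  have := Psi_mono p q hne
  have h0 : P0 p = P0 q := congrArg Prod.fst h
  have h1 : P1 p = P1 q := congrArg Prod.snd h
  rw [h0, h1] at this
  simp at this

lemma P0_pos (p : ℝ × ℝ) : 0 < P0 p := by
  have hF := F_cont
  unfold P0 KK
  refine intervalIntegral.integral_pos Real.pi_pos (by fun_prop) ?_ ⟨0, ⟨le_rfl, Real.pi_pos.le⟩, ?_⟩
  · intro θ _
    have := F_pos (p.1 + p.2 * Real.cos θ)
    positivity
  · have := F_pos (p.1 + p.2 * Real.cos 0)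
    positivity

lemma P1_zero (A : ℝ) : P1 (A, 0) = 0 := by
  unfold P1 KK
  simp

lemma P0_zero (A : ℝ) : P0 (A, 0) = Real.pi * fermi 2 A := by
  unfold P0 KK
  simp

lemma P1_pos (A B : ℝ) (hB : 0 < B) : 0 < P1 (A, B) := by
  have h := Psi_mono (A, B) (A, 0) (by simp [hB.ne'])
  rw [P1_zero] at h
  simp at h
  exact (pos_iff_pos_of_mul_pos h).2 hB

lemma P1_lt (p : ℝ × ℝ) : P1 p < P0 p := by
  have hF := F_cont
  rw [← sub_pos]
  unfold P0 P1 KK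
  rw [← intervalIntegral.integral_sub]
  · refine intervalIntegral.integral_pos Real.pi_pos (by fun_prop) ?_
      ⟨Real.pi, ⟨Real.pi_pos.le, le_rfl⟩, ?_⟩
    · intro θ _
      have := F_pos (p.1 + p.2 * Real.cos θ)
      have := Real.cos_le_one θ
      nlinarith
    · have := F_pos (p.1 + p.2 * Real.cos Real.pi)
      rw [Real.cos_pi] at *
      linarith
  all_goals exact Continuous.intervalIntegrable (by fun_prop) _ _

lemma P0_strictMono (B : ℝ) : StrictMono (fun A => P0 (A, B)) := by
  intro a a' h
  have h2 := Psi_mono (a', B) (a, B) (by simp [h.ne'])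
  simp at h2
  have := (pos_iff_pos_of_mul_pos h2).2 (sub_pos.2 h)
  simpa using this

lemma abs_cos_bd (B θ : ℝ) : |B * Real.cos θ| ≤ |B| := by
  rw [abs_mul]
  exact mul_le_of_le_one_right (abs_nonneg _) (Real.abs_cos_le_one θ)

lemma P0_le (A B : ℝ) : P0 (A, B) ≤ Real.pi * fermi 2 (A + |B|) := by
  have hF := F_cont
  unfold P0 KK
  have h : ∫ θ in (0:ℝ)..Real.pi, 1 * fermi 2 (A + B * Real.cos θ) ≤
      ∫ _ in (0:ℝ)..Real.pi, fermi 2 (A + |B|) := by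
    refine intervalIntegral.integral_mono_on Real.pi_pos.le
      (Continuous.intervalIntegrable (by fun_prop) _ _) intervalIntegrable_const ?_
    intro θ _
    rw [one_mul]
    apply F_mono.monotone
    have := abs_le.1 (abs_cos_bd B θ)
    linarith [this.2]
  simpa using h

lemma P0_ge (A B : ℝ) : Real.pi * fermi 2 (A - |B|) ≤ P0 (A, B) := by
  have hF := F_cont
  unfold P0 KK
  have h : ∫ _ in (0:ℝ)..Real.pi, fermi 2 (A - |B|) ≤
      ∫ θ in (0:ℝ)..Real.pi, 1 * fermi 2 (A + B * Real.cos θ) := by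
    refine intervalIntegral.integral_mono_on Real.pi_pos.le intervalIntegrable_const
      (Continuous.intervalIntegrable (by fun_prop) _ _) ?_
    intro θ _
    rw [one_mul]
    apply F_mono.monotone
    have := abs_le.1 (abs_cos_bd B θ)
    linarith [this.1]
  simpa using h

lemma exists_level (x : ℝ) (hx : 0 < x) (B : ℝ) : ∃ A, P0 (A, B) = x := by
  have hc : Continuous (fun A => P0 (A, B)) := by
    have := P0_contDiff.continuous
    fun_prop
  have hpi := Real.pi_pos
  refine mem_range_of_exists_le_of_exists_ge hc ⟨Real.log (x / Real.pi) - |B|, ?_⟩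
    ⟨x + 1 + |B|, ?_⟩
  · refine (P0_le _ _).trans ?_
    rw [sub_add_cancel]
    have h := F_le_exp (Real.log (x / Real.pi))
    rw [Real.exp_log (by positivity)] at h
    calc Real.pi * fermi 2 (Real.log (x / Real.pi)) ≤ Real.pi * (x / Real.pi) := by gcongr
      _ = x := by field_simp
  · refine le_trans ?_ (P0_ge _ _)
    rw [add_sub_cancel_right]
    have h := F_ge (x + 1) (by linarith)
    have h3 := Real.pi_gt_three
    have h4 : x ≤ (x+1)^2/4 := by nlinarith [sq_nonneg (x - 1)]
    nlinarith

lemma level_cont (x : ℝ) (a : ℝ → ℝ) (ha : ∀ B, P0 (a B, B) = x) : Continuous a := by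
  have hP := P0_contDiff.continuous
  rw [continuous_iff_continuousAt]
  intro B
  rw [Metric.continuousAt_iff']
  intro ε hε
  have h1 : ∀ᶠ b in nhds B, P0 (a B - ε, b) < x := by
    have hc : Continuous (fun b => P0 (a B - ε, b)) := by fun_prop
    refine hc.continuousAt.eventually_lt_const ?_
    conv_rhs => rw [← ha B]
    exact P0_strictMono B (by linarith)
  have h2 : ∀ᶠ b in nhds B, x < P0 (a B + ε, b) := by
    have hc : Continuous (fun b => P0 (a B + ε, b)) := by fun_prop
    refine hc.continuousAt.eventually_const_lt ?_
    conv_lhs => rw [← ha B]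
    exact P0_strictMono B (by linarith)
  filter_upwards [h1, h2] with b h1 h2
  rw [← ha b] at h1 h2
  have h1 := (P0_strictMono b).lt_iff_lt.1 h1
  have h2 := (P0_strictMono b).lt_iff_lt.1 h2
  rw [Real.dist_eq, abs_lt]
  constructor <;> linarith

lemma P1_large (x y : ℝ) (hy : 0 ≤ y) (hyx : y < x) (a : ℝ → ℝ) (ha : ∀ B, P0 (a B, B) = x) :
    ∃ B, 0 ≤ B ∧ y ≤ P1 (a B, B) := by
  have hF := F_cont
  have hpi := Real.pi_pos
  have hx : 0 < x := by linarith
  obtain ⟨ε, hε⟩ : ∃ ε, ε = x - y := ⟨_, rfl⟩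
  have hε0 : 0 < ε := by linarith
  obtain ⟨δ, hδ⟩ : ∃ δ, δ = ε / (2 * x) := ⟨_, rfl⟩
  have hδ0 : 0 < δ := by rw [hδ]; positivity
  have hδ1 : δ ≤ 1 / 2 := by
    rw [hδ, div_le_iff₀ (by positivity)]; linarith
  have hδx : δ * x = ε / 2 := by rw [hδ]; field_simp
  obtain ⟨T, hT⟩ : ∃ T, T = x / δ + 2 := ⟨_, rfl⟩
  have hM : 0 < x / δ := by positivity
  obtain ⟨S, hS⟩ : ∃ S, S = Real.log (ε / (8 * Real.pi)) := ⟨_, rfl⟩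
  obtain ⟨B, hB⟩ : ∃ B, B = 2 * (T + |S|) / δ := ⟨_, rfl⟩
  have hB0 : 0 ≤ B := by
    have : 0 ≤ T := by linarith
    rw [hB]; positivity
  have hBδ : δ * B = 2 * (T + |S|) := by rw [hB]; field_simp
  refine ⟨B, hB0, ?_⟩
  obtain ⟨A, hA⟩ : ∃ A, A = a B := ⟨_, rfl⟩
  have hAx : P0 (A, B) = x := by rw [hA]; exact ha B
  rw [← hA]
  -- bound on `A + B`
  have hC : A + B - δ * B / 2 < T := by
    by_contra! hcon
    have h1 : δ * fermi 2 T ≤ x := by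
      rw [← hAx]
      unfold P0 KK
      rw [← intervalIntegral.integral_add_adjacent_intervals (a := 0) (b := δ) (c := Real.pi)
        (Continuous.intervalIntegrable (by fun_prop) _ _)
        (Continuous.intervalIntegrable (by fun_prop) _ _)]
      have i1 : ∫ _ in (0:ℝ)..δ, fermi 2 T ≤
          ∫ θ in (0:ℝ)..δ, 1 * fermi 2 (A + B * Real.cos θ) := by
        refine intervalIntegral.integral_mono_on hδ0.le intervalIntegrable_const
          (Continuous.intervalIntegrable (by fun_prop) _ _) ?_
        intro θ hθ
        rw [one_mul]
        apply F_mono.monotone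
        have hc := Real.one_sub_sq_div_two_le_cos (x := θ)
        have h5 : θ ^ 2 ≤ δ := by nlinarith [hθ.1, hθ.2]
        have h6 : B * (1 - δ / 2) ≤ B * Real.cos θ := by
          apply mul_le_mul_of_nonneg_left _ hB0
          linarith
        nlinarith
      have i2 : 0 ≤ ∫ θ in δ..Real.pi, 1 * fermi 2 (A + B * Real.cos θ) := by
        refine intervalIntegral.integral_nonneg (by linarith [Real.pi_gt_three]) ?_
        intro θ _
        rw [one_mul]
        exact (F_pos _).le
      simp only [intervalIntegral.integral_const, sub_zero, smul_eq_mul] at i1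
      simp only at i1 i2 ⊢
      linarith
    have h2 := F_ge T (by linarith)
    have h3 : fermi 2 T ≤ x / δ := by
      rw [le_div_iff₀ hδ0]; linarith
    have h4 : x / δ < T ^ 2 / 4 := by rw [hT]; nlinarith
    linarith
  have hC2 : A + B - δ * B ≤ -|S| := by linarith
  have hFs : fermi 2 (A + B - δ * B) ≤ ε / (8 * Real.pi) := by
    refine (F_mono.monotone (hC2.trans (by linarith [neg_abs_le S] : -|S| ≤ S))).trans ?_
    refine (F_le_exp _).trans ?_
    rw [hS, Real.exp_log (by positivity)]
  have hmain : P0 (A, B) - P1 (A, B) ≤ δ * P0 (A, B) + Real.pi * (2 * fermi 2 (A + B - δ * B)) := by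
    have e : δ * P0 (A, B) + Real.pi * (2 * fermi 2 (A + B - δ * B)) =
      ∫ θ in (0:ℝ)..Real.pi, (δ * (1 * fermi 2 (A + B * Real.cos θ)) +
        2 * fermi 2 (A + B - δ * B)) := by
      rw [intervalIntegral.integral_add (Continuous.intervalIntegrable (by fun_prop) _ _)
        intervalIntegrable_const, intervalIntegral.integral_const_mul]
      simp only [P0, KK, intervalIntegral.integral_const, sub_zero, smul_eq_mul]
    rw [e]
    unfold P0 P1 KK
    rw [← intervalIntegral.integral_sub (Continuous.intervalIntegrable (by fun_prop) _ _)
      (Continuous.intervalIntegrable (by fun_prop) _ _)]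
    refine intervalIntegral.integral_mono_on hpi.le
      (Continuous.intervalIntegrable (by fun_prop) _ _)
      (Continuous.intervalIntegrable (by fun_prop) _ _) ?_
    intro θ _
    have hp := F_pos (A + B * Real.cos θ)
    have hp2 := F_pos (A + B - δ * B)
    simp only
    rcases le_total (1 - Real.cos θ) δ with h | h
    · nlinarith
    · have h6 : B * Real.cos θ ≤ B * (1 - δ) := by
        apply mul_le_mul_of_nonneg_left _ hB0
        linarith
      have h7 : fermi 2 (A + B * Real.cos θ) ≤ fermi 2 (A + B - δ * B) := by
        apply F_mono.monotone; linarith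
      have h8 := Real.neg_one_le_cos θ
      have h9 : 0 < δ * fermi 2 (A + B * Real.cos θ) := by positivity
      nlinarith
  rw [hAx] at hmain
  have h10 : Real.pi * (2 * fermi 2 (A + B - δ * B)) ≤ ε / 4 := by
    calc Real.pi * (2 * fermi 2 (A + B - δ * B)) ≤ Real.pi * (2 * (ε / (8 * Real.pi))) := by gcongr
      _ = ε / 4 := by field_simp; norm_num
  linarith

lemma Psi_surj (x y : ℝ) (hy : 0 ≤ y) (hyx : y < x) :
    ∃ A B, 0 ≤ B ∧ P0 (A, B) = x ∧ P1 (A, B) = y := by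
  choose a ha using exists_level x (by linarith)
  have hac := level_cont x a ha
  obtain ⟨B, hB, hyB⟩ := P1_large x y hy hyx a ha
  have hP := P1_contDiff.continuous
  have hc : Continuous (fun b => P1 (a b, b)) := by fun_prop
  have := intermediate_value_Icc hB hc.continuousOn
  obtain ⟨b, hb, hby⟩ := this ⟨by simpa [P1_zero] using hy, hyB⟩
  exact ⟨a b, b, hb.1, ha b, hby⟩

lemma Phi_eq (p : ℝ × ℝ) : Phi p = (P0 p / Real.pi, P1 p / P0 p) := by
  have hpi := Real.pi_pos
  have h0 : calI 0 2 p.1 p.2 = P0 p / Real.pi := by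
    unfold calI P0 KK; simp; ring
  have h1 : calI 1 2 p.1 p.2 = P1 p / Real.pi := by
    unfold calI P1 KK; simp; ring
  unfold Phi
  rw [h0, h1]
  have := P0_pos p
  congr 1
  field_simp

lemma Phi_inj : Function.Injective Phi := by
  intro p q h
  rw [Phi_eq, Phi_eq, Prod.mk.injEq] at h
  have hpi := Real.pi_pos
  have h0 : P0 p = P0 q := by
    have := h.1
    field_simp at this
    exact this
  have h1 := h.2
  have := P0_pos q
  rw [h0] at h1
  field_simp at h1
  exact Psi_inj (Prod.ext h0 h1)

lemma Phi_surj (y : ℝ × ℝ) (hy : y ∈ Ioi (0:ℝ) ×ˢ Ico (0:ℝ) 1) :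
    ∃ A B, 0 ≤ B ∧ Psi (A, B) = (Real.pi * y.1, Real.pi * y.1 * y.2) ∧ Phi (A, B) = y := by
  have hpi := Real.pi_pos
  obtain ⟨h1, h2, h3⟩ := hy
  have h1 : 0 < y.1 := h1
  have hx : 0 < Real.pi * y.1 := by positivity
  obtain ⟨A, B, hB, e0, e1⟩ := Psi_surj (Real.pi * y.1) (Real.pi * y.1 * y.2) (by positivity)
    (mul_lt_of_lt_one_right hx h3)
  refine ⟨A, B, hB, Prod.ext e0 e1, ?_⟩
  rw [Phi_eq, e0, e1]
  ext
  · simp only; field_simp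
  · simp only; field_simp

lemma Phi_contDiff : ContDiff ℝ 1 Phi := by
  have : Phi = fun p => (P0 p / Real.pi, P1 p / P0 p) := funext Phi_eq
  rw [this]
  exact (P0_contDiff.div_const _).prodMk (P1_contDiff.div P0_contDiff fun p => (P0_pos p).ne')

lemma Psi_inv_contDiffAt (p : ℝ × ℝ) : ContDiffAt ℝ 1 (Function.invFun Psi) (Psi p) := by
  obtain ⟨e, he⟩ := Psi_deriv p
  have hp : ContDiffAt ℝ 1 Psi p := Psi_contDiff.contDiffAt
  refine (hp.to_localInverse he one_ne_zero).congr_of_eventuallyEq ?_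
  have hs := hp.hasStrictFDerivAt' he one_ne_zero
  filter_upwards [hs.eventually_right_inverse] with y hy
  apply Psi_inj
  rw [Function.invFun_eq ⟨_, hy⟩]
  exact hy.symm

/-- `Φ` is a bijection from `ℝ × [0,∞)` onto `(0,∞) × [0,1)`, is `C¹` there
(one-sidedly at `B = 0`), and its restriction to `ℝ × (0,∞)` is a `C¹`
diffeomorphism onto `(0,∞) × (0,1)`. -/
theorem phi_bijective_and_C1_diffeo :
    Set.BijOn Phi (Set.univ ×ˢ Set.Ici (0 : ℝ)) (Set.Ioi (0 : ℝ) ×ˢ Set.Ico (0 : ℝ) 1) ∧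
    ContDiffOn ℝ 1 Phi (Set.univ ×ˢ Set.Ici (0 : ℝ)) ∧
    Set.BijOn Phi (Set.univ ×ˢ Set.Ioi (0 : ℝ)) (Set.Ioi (0 : ℝ) ×ˢ Set.Ioo (0 : ℝ) 1) ∧
    ∃ g : ℝ × ℝ → ℝ × ℝ,
      ContDiffOn ℝ 1 g (Set.Ioi (0 : ℝ) ×ˢ Set.Ioo (0 : ℝ) 1) ∧
      (∀ x ∈ Set.univ ×ˢ Set.Ioi (0 : ℝ), g (Phi x) = x) ∧
      (∀ y ∈ Set.Ioi (0 : ℝ) ×ˢ Set.Ioo (0 : ℝ) 1, Phi (g y) = y) := by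

  have hpi := Real.pi_pos
  have key : ∀ p : ℝ × ℝ, (Real.pi * (Phi p).1, Real.pi * (Phi p).1 * (Phi p).2) = Psi p := by
    intro p
    have := P0_pos p
    rw [Phi_eq]
    ext
    · simp only [Psi]; field_simp
    · simp only [Psi]; field_simp
  have hsub : ∀ y ∈ Set.Ioi (0 : ℝ) ×ˢ Set.Ioo (0 : ℝ) 1, y ∈ Set.Ioi (0 : ℝ) ×ˢ Set.Ico (0 : ℝ) 1 :=
    fun y hy => ⟨hy.1, hy.2.1.le, hy.2.2⟩
  have maps2 : ∀ p ∈ Set.univ ×ˢ Set.Ioi (0 : ℝ), Phi p ∈ Set.Ioi (0 : ℝ) ×ˢ Set.Ioo (0 : ℝ) 1 := by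
    rintro ⟨A, B⟩ ⟨_, hB⟩
    have h0 := P0_pos (A, B)
    have h1 := P1_pos A B hB
    have h2 := P1_lt (A, B)
    rw [Phi_eq]
    exact ⟨div_pos h0 hpi, div_pos h1 h0, (div_lt_one h0).2 h2⟩
  refine ⟨⟨?_, Phi_inj.injOn, ?_⟩, Phi_contDiff.contDiffOn, ⟨maps2, Phi_inj.injOn, ?_⟩,
    fun y => Function.invFun Psi (Real.pi * y.1, Real.pi * y.1 * y.2), ?_, ?_, ?_⟩
  · rintro ⟨A, B⟩ ⟨hA, hB⟩
    rcases (show (0:ℝ) ≤ B from hB).eq_or_lt with h | h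
    · subst h
      rw [Phi_eq, P1_zero]
      exact ⟨div_pos (P0_pos _) hpi, by simp⟩
    · exact hsub _ (maps2 (A, B) ⟨hA, h⟩)
  · intro y hy
    obtain ⟨A, B, hB, _, e⟩ := Phi_surj y hy
    exact ⟨(A, B), ⟨mem_univ _, hB⟩, e⟩
  · intro y hy
    obtain ⟨A, B, hB, _, e⟩ := Phi_surj y (hsub y hy)
    refine ⟨(A, B), ⟨mem_univ _, lt_of_le_of_ne hB ?_⟩, e⟩
    rintro rfl
    have h := hy.2.1
    rw [← e, Phi_eq, P1_zero] at h
    simp at h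
  · intro y hy
    obtain ⟨A, B, hB, e, _⟩ := Phi_surj y (hsub y hy)
    have h := Psi_inv_contDiffAt (A, B)
    rw [e] at h
    have hin : ContDiffAt ℝ 1 (fun y : ℝ × ℝ => (Real.pi * y.1, Real.pi * y.1 * y.2)) y := by
      fun_prop
    exact (ContDiffAt.comp y h hin).contDiffWithinAt
  · intro x _
    show Function.invFun Psi (Real.pi * (Phi x).1, Real.pi * (Phi x).1 * (Phi x).2) = x
    rw [key]
    exact Function.leftInverse_invFun Psi_inj x
  · intro y hy
    obtain ⟨A, B, hB, e, e2⟩ := Phi_surj y (hsub y hy)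
    show Phi (Function.invFun Psi (Real.pi * y.1, Real.pi * y.1 * y.2)) = y
    rw [← e, Function.leftInverse_invFun Psi_inj, e2]
end

section
/- Let s > 0 and let N ≥ 0 be an integer. For every sequence (A_k, B_k) with B_k > 0 and A_k + B_k → −∞, the ratio 𝓘_N^s(A_k,B_k) / ( e^{A_k} I_N(B_k) ) converges to 1, where I_N(B) = (1/π)∫₀^π cos(Nθ) e^{B cos θ} dθ is the modified Bessel function of the first kind. -/
open MeasureTheory Set Filter

/-- The modified Bessel function of the first kind,
`I_N(B) = (1/π) ∫₀^π cos(Nθ) e^{B cos θ} dθ`. -/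
noncomputable def besselI (N : ℕ) (B : ℝ) : ℝ :=
  (1 / Real.pi) * ∫ θ in (0 : ℝ)..Real.pi, Real.cos (N * θ) * Real.exp (B * Real.cos θ)

noncomputable def bJ (N : ℕ) (x : ℝ) : ℝ :=
  ∫ θ in (0 : ℝ)..Real.pi, Real.cos (N * θ) * Real.exp (x * Real.cos θ)

noncomputable def bK (N : ℕ) (x : ℝ) : ℝ :=
  ∫ θ in (0 : ℝ)..Real.pi, Real.sin θ ^ (2 * N) * Real.exp (x * Real.cos θ)

noncomputable def bP (N : ℕ) : ℝ := ∏ i ∈ Finset.range N, (2 * (i : ℝ) + 1)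

lemma byparts (x : ℝ) (g g' : ℝ → ℝ) (hg : ∀ θ, HasDerivAt g (g' θ) θ) (hc : Continuous g')
    (h0 : g 0 = 0) (h1 : g Real.pi = 0) :
    x * ∫ θ in (0 : ℝ)..Real.pi, g θ * Real.sin θ * Real.exp (x * Real.cos θ)
      = ∫ θ in (0 : ℝ)..Real.pi, g' θ * Real.exp (x * Real.cos θ) := by
  have hgc : Continuous g := continuous_iff_continuousAt.2 fun θ => (hg θ).continuousAt
  have hd : ∀ θ, HasDerivAt (fun θ => g θ * Real.exp (x * Real.cos θ))
      (g' θ * Real.exp (x * Real.cos θ)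
        - x * (g θ * Real.sin θ * Real.exp (x * Real.cos θ))) θ := by
    intro θ
    have := (hg θ).mul (((Real.hasDerivAt_cos θ).const_mul x).exp)
    convert! this using 1
    ring
  have key := intervalIntegral.integral_eq_sub_of_hasDerivAt (a := 0) (b := Real.pi)
    (fun θ _ => hd θ) (Continuous.intervalIntegrable (by fun_prop) _ _)
  rw [intervalIntegral.integral_sub (Continuous.intervalIntegrable (by fun_prop) _ _)
    (Continuous.intervalIntegrable (by fun_prop) _ _), intervalIntegral.integral_const_mul] at key
  simp only [h0, h1] at key
  linarith

lemma bJ_rec (N : ℕ) (x : ℝ) :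
    x * bJ (N + 2) x = x * bJ N x - 2 * (N + 1) * bJ (N + 1) x := by
  have h := byparts x (fun θ => Real.sin ((N + 1 : ℝ) * θ))
    (fun θ => (N + 1 : ℝ) * Real.cos ((N + 1 : ℝ) * θ))
    (fun θ => by
      have := ((hasDerivAt_id θ).const_mul (N + 1 : ℝ)).sin
      convert! this using 1
      simp; ring) (by fun_prop) (by simp)
    (by have := Real.sin_nat_mul_pi (N + 1); push_cast at this; exact this)
  have h2 : bJ N x - bJ (N + 2) x = 2 * ∫ θ in (0 : ℝ)..Real.pi,
      Real.sin ((N + 1 : ℝ) * θ) * Real.sin θ * Real.exp (x * Real.cos θ) := by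
    unfold bJ
    rw [← intervalIntegral.integral_sub (Continuous.intervalIntegrable (by fun_prop) _ _)
      (Continuous.intervalIntegrable (by fun_prop) _ _), ← intervalIntegral.integral_const_mul]
    congr 1
    ext θ
    have e1 : (N : ℝ) * θ = (N + 1 : ℝ) * θ - θ := by ring
    have e2 : ((N + 2 : ℕ) : ℝ) * θ = (N + 1 : ℝ) * θ + θ := by push_cast; ring
    rw [e1, e2, Real.cos_sub, Real.cos_add]
    ring
  have h3 : (∫ θ in (0 : ℝ)..Real.pi,
      (N + 1 : ℝ) * Real.cos ((N + 1 : ℝ) * θ) * Real.exp (x * Real.cos θ))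
      = (N + 1) * bJ (N + 1) x := by
    unfold bJ
    rw [← intervalIntegral.integral_const_mul]
    push_cast
    simp only [mul_assoc]
  rw [h3] at h
  linear_combination -x * h2 - 2 * h

lemma bK_rec (N : ℕ) (x : ℝ) :
    x ^ 2 * bK (N + 2) x
      = (2 * N + 1) * (2 * N + 3) * bK N x - (2 * N + 3) * (2 * N + 2) * bK (N + 1) x := by
  have h1 := byparts x (fun θ => Real.sin θ ^ (2 * N + 3))
    (fun θ => (2 * N + 3 : ℝ) * (Real.sin θ ^ (2 * N + 1) * Real.cos θ * Real.sin θ))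
    (fun θ => by
      have := (Real.hasDerivAt_sin θ).pow (2 * N + 3)
      convert! this using 1
      push_cast; ring) (by fun_prop) (by simp) (by simp)
  have h2 := byparts x (fun θ => Real.sin θ ^ (2 * N + 1) * Real.cos θ)
    (fun θ => (2 * N + 1 : ℝ) * Real.sin θ ^ (2 * N) - (2 * N + 2) * Real.sin θ ^ (2 * (N + 1)))
    (fun θ => by
      have := ((Real.hasDerivAt_sin θ).pow (2 * N + 1)).mul (Real.hasDerivAt_cos θ)
      convert! this using 1
      push_cast; simp
      have := Real.sin_sq_add_cos_sq θ
      have e : Real.cos θ * Real.cos θ = 1 - Real.sin θ ^ 2 := by linarith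
      rw [mul_assoc _ (Real.cos θ), e]
      ring) (by fun_prop) (by simp) (by simp)
  have e1 : (∫ θ in (0 : ℝ)..Real.pi,
      Real.sin θ ^ (2 * N + 3) * Real.sin θ * Real.exp (x * Real.cos θ)) = bK (N + 2) x := by
    unfold bK
    congr 1
  have e2 : (∫ θ in (0 : ℝ)..Real.pi,
      (2 * N + 3 : ℝ) * (Real.sin θ ^ (2 * N + 1) * Real.cos θ * Real.sin θ)
        * Real.exp (x * Real.cos θ)) = (2 * N + 3) * ∫ θ in (0 : ℝ)..Real.pi,
      Real.sin θ ^ (2 * N + 1) * Real.cos θ * Real.sin θ * Real.exp (x * Real.cos θ) := by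
    rw [← intervalIntegral.integral_const_mul]
    simp only [mul_assoc]
  have e3 : (∫ θ in (0 : ℝ)..Real.pi,
      ((2 * N + 1 : ℝ) * Real.sin θ ^ (2 * N) - (2 * N + 2) * Real.sin θ ^ (2 * (N + 1)))
        * Real.exp (x * Real.cos θ)) = (2 * N + 1) * bK N x - (2 * N + 2) * bK (N + 1) x := by
    unfold bK
    rw [← intervalIntegral.integral_const_mul, ← intervalIntegral.integral_const_mul,
      ← intervalIntegral.integral_sub (Continuous.intervalIntegrable (by fun_prop) _ _)
      (Continuous.intervalIntegrable (by fun_prop) _ _)]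
    congr 1
    ext θ
    ring
  rw [e1, e2] at h1
  rw [e3] at h2
  linear_combination x * h1 + (2 * N + 3) * h2

lemma poisson (x : ℝ) (hx : 0 < x) (N : ℕ) :
    bP N * bJ N x = x ^ N * bK N x ∧ bP (N + 1) * bJ (N + 1) x = x ^ (N + 1) * bK (N + 1) x := by
  induction N with
  | zero =>
    refine ⟨by simp [bP, bJ, bK], ?_⟩
    have h := byparts x Real.sin Real.cos Real.hasDerivAt_sin Real.continuous_cos (by simp) (by simp)
    simp only [bP, bJ, bK]
    simp
    rw [← h]
    simp only [pow_two]
  | succ N ih =>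
    refine ⟨ih.2, ?_⟩
    obtain ⟨h0, h1⟩ := ih
    have p1 : bP (N + 1) = bP N * (2 * N + 1) := by simp [bP, Finset.prod_range_succ]
    have p2 : bP (N + 1 + 1) = bP (N + 1) * (2 * N + 3) := by
      rw [bP, Finset.prod_range_succ, ← bP]; push_cast; ring
    have a := bJ_rec N x
    have b := bK_rec N x
    apply mul_left_cancel₀ hx.ne'
    rw [p2]
    rw [p1] at h1 ⊢
    show x * (bP N * (2 * N + 1) * (2 * N + 3) * bJ (N + 2) x) = x * (x ^ (N + 1 + 1) * bK (N + 2) x)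
    linear_combination (bP N * (2 * N + 1) * (2 * N + 3)) * a - x ^ (N + 1) * b
      + (2 * N + 1) * (2 * N + 3) * x * h0 - 2 * (N + 1) * (2 * N + 3) * h1

lemma bP_pos (N : ℕ) : 0 < bP N := Finset.prod_pos fun i _ => by positivity

lemma bK_pos (N : ℕ) (x : ℝ) : 0 < bK N x := by
  apply intervalIntegral.intervalIntegral_pos_of_pos_on
  · exact Continuous.intervalIntegrable (by fun_prop) _ _
  · intro θ hθ
    have := Real.sin_pos_of_mem_Ioo hθ
    positivity
  · exact Real.pi_pos

lemma bK_le (N : ℕ) (x y : ℝ) (hxy : x ≤ y) : bK N y ≤ Real.exp (y - x) * bK N x := by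
  unfold bK
  rw [← intervalIntegral.integral_const_mul]
  apply intervalIntegral.integral_mono_on Real.pi_pos.le
    (Continuous.intervalIntegrable (by fun_prop) _ _)
    (Continuous.intervalIntegrable (by fun_prop) _ _)
  intro θ hθ
  have h : Real.exp (y * Real.cos θ) ≤ Real.exp (y - x) * Real.exp (x * Real.cos θ) := by
    rw [← Real.exp_add]
    apply Real.exp_le_exp.2
    nlinarith [Real.cos_le_one θ]
  have : 0 ≤ Real.sin θ ^ (2 * N) := by rw [pow_mul]; positivity
  nlinarith [mul_le_mul_of_nonneg_left h this]

lemma bJ_pos (N : ℕ) (x : ℝ) (hx : 0 < x) : 0 < bJ N x := by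
  have h := (poisson x hx N).1
  have : 0 < bP N * bJ N x := by rw [h]; have := bK_pos N x; positivity
  exact pos_of_mul_pos_right this (bP_pos N).le

lemma bJ_le (N : ℕ) (x : ℝ) (hx : 0 < x) (m : ℕ) :
    bJ N ((m + 1 : ℝ) * x) ≤ (m + 1 : ℝ) ^ N * Real.exp (m * x) * bJ N x := by
  have h := (poisson x hx N).1
  have h' := (poisson ((m + 1 : ℝ) * x) (by positivity) N).1
  have hk := bK_le N x ((m + 1 : ℝ) * x) (by nlinarith [mul_nonneg (Nat.cast_nonneg (α := ℝ) m) hx.le])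
  rw [show (m + 1 : ℝ) * x - x = m * x by ring] at hk
  refine le_of_mul_le_mul_left ?_ (bP_pos N)
  rw [h', show bP N * ((m + 1 : ℝ) ^ N * Real.exp (m * x) * bJ N x)
    = (m + 1 : ℝ) ^ N * Real.exp (m * x) * (bP N * bJ N x) by ring, h, mul_pow]
  have : 0 ≤ (m + 1 : ℝ) ^ N * x ^ N := by positivity
  nlinarith [mul_le_mul_of_nonneg_left hk this]

lemma summable_exp_geo (x : ℝ) (hx : x < 0) : Summable fun m : ℕ => Real.exp ((m + 1 : ℝ) * x) := by
  have : Summable fun m : ℕ => Real.exp x * Real.exp x ^ m :=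
    (summable_geometric_of_lt_one (Real.exp_pos x).le (Real.exp_lt_one_iff.2 hx)).mul_left _
  refine this.congr fun m => ?_
  rw [← Real.exp_nat_mul, ← Real.exp_add]
  congr 1
  ring

lemma fermi_hasSum (s : ℝ) (hs : 0 < s) (x : ℝ) (hx : x < 0) :
    HasSum (fun m : ℕ => (-1 : ℝ) ^ m * (1 / (m + 1 : ℝ)) ^ s * Real.exp ((m + 1 : ℝ) * x))
      (fermi s x) := by
  have hG := Real.Gamma_pos_of_pos hs
  set F : ℕ → ℝ → ℝ := fun m t =>
    ((-1 : ℝ) ^ m * Real.exp ((m + 1 : ℝ) * x)) * (t ^ (s - 1) * Real.exp (-((m + 1 : ℝ) * t)))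
    with hF
  have hint : ∀ m : ℕ, IntegrableOn
      (fun t : ℝ => t ^ (s - 1) * Real.exp (-((m + 1 : ℝ) * t))) (Ioi 0) := by
    intro m
    have := integrableOn_rpow_mul_exp_neg_mul_rpow (p := 1) (s := s - 1) (b := (m + 1 : ℝ))
      (by linarith) one_pos (by positivity)
    simpa only [Real.rpow_one, neg_mul] using this
  have hval : ∀ m : ℕ, (∫ t in Ioi (0 : ℝ), t ^ (s - 1) * Real.exp (-((m + 1 : ℝ) * t)))
      = (1 / (m + 1 : ℝ)) ^ s * Real.Gamma s := fun m =>
    Real.integral_rpow_mul_exp_neg_mul_Ioi hs (by positivity)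
  have hsum : HasSum (fun m => ∫ t in Ioi (0 : ℝ), F m t) (∫ t in Ioi (0 : ℝ), ∑' m, F m t) := by
    apply hasSum_integral_of_summable_integral_norm
    · intro m
      exact (hint m).const_mul _
    · have e : ∀ m : ℕ, (∫ t in Ioi (0 : ℝ), ‖F m t‖)
          = Real.exp ((m + 1 : ℝ) * x) * ((1 / (m + 1 : ℝ)) ^ s * Real.Gamma s) := by
        intro m
        rw [← hval m, ← integral_const_mul]
        refine setIntegral_congr_fun measurableSet_Ioi fun t ht => ?_
        have ht' : (0 : ℝ) < t := ht
        have : 0 ≤ t ^ (s - 1) := by positivity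
        simp [hF, abs_mul, abs_of_nonneg this]
      simp_rw [e]
      refine Summable.of_nonneg_of_le (fun m => by positivity) (fun m => ?_)
        ((summable_exp_geo x hx).mul_right (Real.Gamma s))
      have : (1 / (m + 1 : ℝ)) ^ s ≤ 1 := by
        apply Real.rpow_le_one (by positivity) _ hs.le
        rw [div_le_one (by positivity)]
        linarith [Nat.cast_nonneg (α := ℝ) m]
      gcongr
      nlinarith
  have hpt : (∫ t in Ioi (0 : ℝ), ∑' m, F m t)
      = ∫ t in Ioi (0 : ℝ), t ^ (s - 1) / (Real.exp (t - x) + 1) := by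
    refine setIntegral_congr_fun measurableSet_Ioi fun t ht => ?_
    have ht' : (0 : ℝ) < t := ht
    have hlt : Real.exp (x - t) < 1 := Real.exp_lt_one_iff.2 (by linarith)
    have hg := (hasSum_geometric_of_norm_lt_one (ξ := -Real.exp (x - t))
      (by rw [norm_neg, Real.norm_eq_abs, Real.abs_exp]; exact hlt)).mul_left
      (t ^ (s - 1) * Real.exp (x - t))
    have e : (fun m => F m t) = fun m : ℕ =>
        (t ^ (s - 1) * Real.exp (x - t)) * (-Real.exp (x - t)) ^ m := by
      ext m
      have : Real.exp ((m + 1 : ℝ) * x) * Real.exp (-((m + 1 : ℝ) * t))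
          = Real.exp (x - t) * Real.exp (x - t) ^ m := by
        rw [← Real.exp_nat_mul, ← Real.exp_add, ← Real.exp_add]
        congr 1
        ring
      rw [neg_pow]
      simp only [hF]
      linear_combination ((-1 : ℝ) ^ m * t ^ (s - 1)) * this
    show ∑' m, F m t = _
    rw [e, hg.tsum_eq, show t - x = -(x - t) by ring, Real.exp_neg]
    have := Real.exp_pos (x - t)
    have h2 : 1 + Real.exp (x - t) ≠ 0 := by positivity
    rw [sub_neg_eq_add]
    field_simp
  rw [hpt] at hsum
  have := hsum.mul_left (1 / Real.Gamma s)
  rw [← fermi] at this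
  convert! this using 2 with m
  simp only [hF]
  rw [integral_const_mul, hval]
  field_simp

lemma calI_hasSum (s : ℝ) (hs : 0 < s) (N : ℕ) (A B : ℝ) (hB : 0 < B) (hAB : A + B < 0) :
    HasSum (fun m : ℕ => (-1 : ℝ) ^ m * (1 / (m + 1 : ℝ)) ^ s * Real.exp ((m + 1 : ℝ) * A)
        * bJ N ((m + 1 : ℝ) * B))
      (∫ θ in (0 : ℝ)..Real.pi, Real.cos (N * θ) * fermi s (A + B * Real.cos θ)) := by
  have hle : ∀ θ, A + B * Real.cos θ ≤ A + B := fun θ => by nlinarith [Real.cos_le_one θ]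
  have key := intervalIntegral.hasSum_integral_of_dominated_convergence (μ := volume)
    (a := 0) (b := Real.pi)
    (F := fun (m : ℕ) θ => Real.cos (N * θ) * ((-1 : ℝ) ^ m * (1 / (m + 1 : ℝ)) ^ s
      * Real.exp ((m + 1 : ℝ) * (A + B * Real.cos θ))))
    (f := fun θ => Real.cos (N * θ) * fermi s (A + B * Real.cos θ))
    (fun m _ => Real.exp ((m + 1 : ℝ) * (A + B)))
    (fun m => Continuous.aestronglyMeasurable (by fun_prop))
    (fun m => Eventually.of_forall fun θ _ => by
      have h1 : (1 / (m + 1 : ℝ)) ^ s ≤ 1 := by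
        apply Real.rpow_le_one (by positivity) _ hs.le
        rw [div_le_one (by positivity)]
        linarith [Nat.cast_nonneg (α := ℝ) m]
      have h0 : 0 ≤ (1 / (m + 1 : ℝ)) ^ s := by positivity
      have h2 : Real.exp ((m + 1 : ℝ) * (A + B * Real.cos θ)) ≤ Real.exp ((m + 1 : ℝ) * (A + B)) :=
        Real.exp_le_exp.2 (mul_le_mul_of_nonneg_left (hle θ) (by positivity))
      have h3 := Real.abs_cos_le_one (N * θ)
      rw [Real.norm_eq_abs, abs_mul, abs_mul, abs_mul, abs_pow, abs_neg, abs_one, one_pow, one_mul,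
        abs_of_nonneg h0, Real.abs_exp]
      calc _ ≤ 1 * (1 * Real.exp ((m + 1 : ℝ) * (A + B))) := by gcongr
        _ = _ := by ring)
    (Eventually.of_forall fun θ _ => summable_exp_geo _ hAB)
    intervalIntegrable_const
    (Eventually.of_forall fun θ _ =>
      (fermi_hasSum s hs _ (lt_of_le_of_lt (hle θ) hAB)).mul_left _)
  convert! key using 2 with m
  unfold bJ
  rw [← intervalIntegral.integral_const_mul]
  congr 1
  ext θ
  rw [mul_add, Real.exp_add, ← mul_assoc (m + 1 : ℝ) B]
  ring

/-- As `A_k + B_k → -∞` (with `B_k > 0`), `𝓘_N^s(A_k,B_k) ∼ e^{A_k} I_N(B_k)`. -/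
theorem calI_asymptotic_maxwell_boltzmann (s : ℝ) (hs : 0 < s) (N : ℕ) (A B : ℕ → ℝ)
    (hB : ∀ k, 0 < B k)
    (hAB : Tendsto (fun k => A k + B k) atTop atBot) :
    Tendsto (fun k => calI N s (A k) (B k) / (Real.exp (A k) * besselI N (B k)))
      atTop (nhds 1) := by
  set r : ℕ → ℕ → ℝ := fun k m =>
    (-1 : ℝ) ^ m * (1 / (m + 1 : ℝ)) ^ s * Real.exp ((m + 1 : ℝ) * A k)
        * bJ N ((m + 1 : ℝ) * B k) / (Real.exp (A k) * bJ N (B k)) with hr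
  have hev : ∀ᶠ k in atTop, A k + B k ≤ -1 := hAB.eventually (eventually_le_atBot _)
  have hsum : ∀ k, A k + B k ≤ -1 →
      ∑' m, r k m = calI N s (A k) (B k) / (Real.exp (A k) * besselI N (B k)) := by
    intro k hk
    rw [((calI_hasSum s hs N (A k) (B k) (hB k) (by linarith)).div_const _).tsum_eq]
    unfold calI besselI
    rw [← bJ]
    have := bJ_pos N (B k) (hB k)
    have := Real.pi_pos
    field_simp
  have hbd : ∀ k m, ‖r k m‖ ≤ (m + 1 : ℝ) ^ N * Real.exp (m * (A k + B k)) := by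
    intro k m
    have hJ := bJ_pos N (B k) (hB k)
    have hJ' := bJ_pos N ((m + 1 : ℝ) * B k) (mul_pos (by positivity) (hB k))
    have h1 : (1 / (m + 1 : ℝ)) ^ s ≤ 1 := by
      apply Real.rpow_le_one (by positivity) _ hs.le
      rw [div_le_one (by positivity)]
      linarith [Nat.cast_nonneg (α := ℝ) m]
    have h0 : 0 ≤ (1 / (m + 1 : ℝ)) ^ s := by positivity
    have hle := bJ_le N (B k) (hB k) m
    simp only [hr]
    rw [Real.norm_eq_abs, abs_div, abs_mul, abs_mul, abs_mul, abs_pow, abs_neg, abs_one, one_pow,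
      one_mul, abs_of_nonneg h0, Real.abs_exp, abs_of_pos hJ', abs_of_pos (by positivity),
      div_le_iff₀ (by positivity)]
    calc _ ≤ 1 * Real.exp ((m + 1 : ℝ) * A k)
          * ((m + 1 : ℝ) ^ N * Real.exp (m * B k) * bJ N (B k)) := by gcongr
      _ = _ := by
        rw [show (m + 1 : ℝ) * A k = m * A k + A k by ring, Real.exp_add, mul_add, Real.exp_add]
        ring
  have hlim : ∀ m : ℕ, Tendsto (fun k => r k m) atTop (nhds (if m = 0 then 1 else 0)) := by
    intro m
    split_ifs with hm
    · subst hm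
      refine tendsto_const_nhds.congr fun k => ?_
      have := bJ_pos N (B k) (hB k)
      simp [hr]
      field_simp
    · apply squeeze_zero_norm (hbd · m)
      have hm' : (0 : ℝ) < m := by exact_mod_cast Nat.pos_of_ne_zero hm
      have := (Real.tendsto_exp_atBot.comp (hAB.const_mul_atBot hm')).const_mul ((m + 1 : ℝ) ^ N)
      simpa using this
  have hbs : Summable fun m : ℕ => (m + 1 : ℝ) ^ N * Real.exp (-m) := by
    have h := summable_pow_mul_geometric_of_norm_lt_one N (r := Real.exp (-1))
      (by rw [Real.norm_eq_abs, Real.abs_exp]; exact Real.exp_lt_one_iff.2 (by norm_num))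
    have h' := ((summable_nat_add_iff 1).2 h).mul_left (Real.exp 1)
    refine h'.congr fun m => ?_
    rw [← Real.exp_nat_mul, mul_left_comm, ← Real.exp_add]
    push_cast
    congr 2
    ring
  have key := tendsto_tsum_of_dominated_convergence (𝓕 := atTop) hbs hlim (by
    filter_upwards [hev] with k hk m
    refine (hbd k m).trans ?_
    gcongr
    nlinarith [Nat.cast_nonneg (α := ℝ) m])
  rw [tsum_ite_eq] at key
  refine key.congr' ?_
  filter_upwards [hev] with k hk using hsum k hk
end

section
/- Define u(ψ) = 𝓕₁²(ψ)/𝓕₀²(ψ), Y(ψ) = (𝓕₀²(ψ)+𝓕₂²(ψ))/(2𝓕₀²(ψ)), Z(ψ) = (𝓕₀¹(ψ)−𝓕₂¹(ψ))/(2√(2𝓕₀²(ψ))) and Z_⊥(ψ) = (𝓕₀¹(ψ)+𝓕₂¹(ψ))/(2√(2𝓕₀²(ψ))). Then, as ψ → (3π/4)⁻ (so that u(ψ) → 1): Y(ψ) = 2u(ψ) − 1 + O((1−u(ψ))²), Z(ψ) = (14^{5/4}/√(30π)) (1−u(ψ))^{5/4} + O((1−u(ψ))^{9/4}), and Z_⊥(ψ)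 = (√5 · 14^{1/4}/√(6π)) (1−u(ψ))^{1/4} + O((1−u(ψ))^{5/4}). -/
open MeasureTheory Set Filter Asymptotics

/-- `C(ψ) = π` for `0 ≤ ψ ≤ π/4`, `C(ψ) = arccos(-cot ψ)` for `π/4 < ψ < 3π/4`. -/
noncomputable def Cpsi (ψ : ℝ) : ℝ :=
  if ψ ≤ Real.pi / 4 then Real.pi else Real.arccos (-(Real.cos ψ / Real.sin ψ))

/-- `𝓕_N^s(ψ) = (1/(πΓ(s+1))) ∫₀^{C(ψ)} cos(Nθ)(cos ψ + sin ψ cos θ)^s dθ`. -/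
noncomputable def calF (N : ℕ) (s ψ : ℝ) : ℝ :=
  (1 / (Real.pi * Real.Gamma (s + 1))) *
    ∫ θ in (0 : ℝ)..Cpsi ψ, Real.cos (N * θ) * (Real.cos ψ + Real.sin ψ * Real.cos θ) ^ s

/-- `u(ψ) = 𝓕₁²(ψ)/𝓕₀²(ψ)`. -/
noncomputable def uFun (ψ : ℝ) : ℝ := calF 1 2 ψ / calF 0 2 ψ

/-- `Y(ψ) = (𝓕₀²(ψ)+𝓕₂²(ψ))/(2𝓕₀²(ψ))`. -/
noncomputable def Yfun (ψ : ℝ) : ℝ := (calF 0 2 ψ + calF 2 2 ψ) / (2 * calF 0 2 ψ)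

/-- `Z(ψ) = (𝓕₀¹(ψ)-𝓕₂¹(ψ))/(2√(2𝓕₀²(ψ)))`. -/
noncomputable def Zfun (ψ : ℝ) : ℝ :=
  (calF 0 1 ψ - calF 2 1 ψ) / (2 * Real.sqrt (2 * calF 0 2 ψ))

/-- `Z_⊥(ψ) = (𝓕₀¹(ψ)+𝓕₂¹(ψ))/(2√(2𝓕₀²(ψ)))`. -/
noncomputable def Zperp (ψ : ℝ) : ℝ :=
  (calF 0 1 ψ + calF 2 1 ψ) / (2 * Real.sqrt (2 * calF 0 2 ψ))

/-- `x` is squeezed between `(1-k) x0` and `x0`. -/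
def QQ (k x x0 : ℝ) : Prop := 0 ≤ x0 ∧ (1 - k) * x0 ≤ x ∧ x ≤ x0

lemma QQ.mul {k m x x0 y y0 : ℝ} (hx : QQ k x x0) (hy : QQ m y y0)
    (hk : 0 ≤ k) (hk1 : k ≤ 1) (hm : 0 ≤ m) (hm1 : m ≤ 1) : QQ (k + m) (x * y) (x0 * y0) := by
  obtain ⟨a1, a2, a3⟩ := hx
  obtain ⟨b1, b2, b3⟩ := hy
  have hA : 0 ≤ (1 - k) * x0 := mul_nonneg (by linarith) a1
  have hB : 0 ≤ (1 - m) * y0 := mul_nonneg (by linarith) b1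
  refine ⟨mul_nonneg a1 b1, ?_, mul_le_mul a3 b3 (hB.trans b2) a1⟩
  have h1 : ((1 - k) * x0) * ((1 - m) * y0) ≤ x * y := mul_le_mul a2 b2 hB (hA.trans a2)
  have h2 : 0 ≤ (k * m) * (x0 * y0) := by positivity
  nlinarith

lemma QQ.mono {k m x x0 : ℝ} (hx : QQ k x x0) (h : k ≤ m) : QQ m x x0 := by
  obtain ⟨a1, a2, a3⟩ := hx
  refine ⟨a1, ?_, a3⟩
  nlinarith

lemma QQ_sin {x c : ℝ} (h0 : 0 ≤ x) (hx : x ≤ c) (hc : c ≤ 1 / 2) :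
    QQ (c ^ 2 / 4) (Real.sin x) x := by
  refine ⟨h0, ?_, Real.sin_le h0⟩
  rcases h0.eq_or_lt with h | h
  · subst h; simp
  · have h1 := Real.sin_gt_sub_cube h
    have h2 : x ^ 2 ≤ c ^ 2 := by gcongr
    have h3 : x * x ^ 2 ≤ x * c ^ 2 := by gcongr
    nlinarith

lemma QQ_cos_sub {x c b : ℝ} (h0 : 0 ≤ x) (hx : x ≤ b) (hb : b ≤ c) (hc : c ≤ 1 / 2) :
    QQ (c ^ 2 / 2) (Real.cos x - Real.cos b) ((b ^ 2 - x ^ 2) / 2) := by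
  have h1 := QQ_sin (x := (b + x) / 2) (c := c) (by linarith) (by linarith) hc
  have h2 := QQ_sin (x := (b - x) / 2) (c := c) (by linarith) (by linarith) hc
  have hc2 : c ^ 2 / 4 ≤ 1 := by nlinarith
  have hc0 : 0 ≤ c ^ 2 / 4 := by positivity
  obtain ⟨a1, a2, a3⟩ := h1.mul h2 hc0 hc2 hc0 hc2
  have e : Real.cos x - Real.cos b = 2 * (Real.sin ((b + x) / 2) * Real.sin ((b - x) / 2)) := by
    rw [Real.cos_sub_cos, show (x - b) / 2 = -((b - x) / 2) by ring, Real.sin_neg, add_comm x b]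
    ring
  rw [e]
  refine ⟨by linarith, by linarith, by linarith⟩

lemma int_QQ {c k : ℝ} (hc : 0 ≤ c) {f f0 : ℝ → ℝ} (hf : Continuous f) (hf0 : Continuous f0)
    (h : ∀ x, 0 ≤ x → x ≤ c → QQ k (f x) (f0 x)) :
    QQ k (∫ x in (0:ℝ)..c, f x) (∫ x in (0:ℝ)..c, f0 x) := by
  refine ⟨intervalIntegral.integral_nonneg hc fun x hx => (h x hx.1 hx.2).1, ?_, ?_⟩
  · rw [← intervalIntegral.integral_const_mul]
    exact intervalIntegral.integral_mono_on hc
      ((continuous_const.mul hf0).intervalIntegrable _ _) (hf.intervalIntegrable _ _)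
      fun x hx => (h x hx.1 hx.2).2.1
  · exact intervalIntegral.integral_mono_on hc (hf.intervalIntegrable _ _)
      (hf0.intervalIntegrable _ _) fun x hx => (h x hx.1 hx.2).2.2

noncomputable def IA (c : ℝ) : ℝ :=
  ∫ x in (0:ℝ)..c, (Real.cos x - Real.cos c) * (Real.cos x - Real.cos c)
noncomputable def IB (c : ℝ) : ℝ :=
  ∫ x in (0:ℝ)..c, (1 - Real.cos x) * ((Real.cos x - Real.cos c) * (Real.cos x - Real.cos c))
noncomputable def ID (c : ℝ) : ℝ :=
  ∫ x in (0:ℝ)..c, (1 - Real.cos x) *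
    ((1 - Real.cos x) * ((Real.cos x - Real.cos c) * (Real.cos x - Real.cos c)))
noncomputable def IE (c : ℝ) : ℝ :=
  ∫ x in (0:ℝ)..c, (Real.sin x * Real.sin x) * (Real.cos x - Real.cos c)
noncomputable def IG (c : ℝ) : ℝ :=
  ∫ x in (0:ℝ)..c, (Real.cos x * Real.cos x) * (Real.cos x - Real.cos c)

lemma int_poly (c p q r s : ℝ) : ∫ x in (0:ℝ)..c, (p + q * x ^ 2 + r * x ^ 4 + s * x ^ 6) =
    p * c + q * c ^ 3 / 3 + r * c ^ 5 / 5 + s * c ^ 7 / 7 := by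
  have hd : ∀ x ∈ Set.uIcc 0 c, HasDerivAt
      (fun x : ℝ => p * x + q * x ^ 3 / 3 + r * x ^ 5 / 5 + s * x ^ 7 / 7)
      (p + q * x ^ 2 + r * x ^ 4 + s * x ^ 6) x := by
    intro x _
    have h1 := (hasDerivAt_id x).const_mul p
    have h3 := ((hasDerivAt_pow 3 x).const_mul q).div_const 3
    have h5 := ((hasDerivAt_pow 5 x).const_mul r).div_const 5
    have h7 := ((hasDerivAt_pow 7 x).const_mul s).div_const 7
    refine HasDerivAt.congr_deriv (((h1.add h3).add h5).add h7) ?_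
    norm_num
    ring
  rw [intervalIntegral.integral_eq_sub_of_hasDerivAt hd
    (Continuous.intervalIntegrable (by fun_prop) _ _)]
  ring

section bounds

lemma csq {c : ℝ} (h0 : 0 ≤ c) (hc : c ≤ 1 / 2) : c ^ 2 ≤ 1 / 4 := by nlinarith

lemma IA_bd {c : ℝ} (h0 : 0 ≤ c) (hc : c ≤ 1 / 2) : QQ (2 * c ^ 2) (IA c) (2 * c ^ 5 / 15) := by
  have hs := csq h0 hc
  have hp := sq_nonneg c
  have := int_QQ (k := 2 * c ^ 2) h0 (f := fun x => (Real.cos x - Real.cos c) * (Real.cos x - Real.cos c))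
    (f0 := fun x => (c ^ 2 - x ^ 2) / 2 * ((c ^ 2 - x ^ 2) / 2)) (by fun_prop) (by fun_prop) ?_
  · refine Eq.mp (congrArg _ ?_) this
    rw [show (fun x : ℝ => (c ^ 2 - x ^ 2) / 2 * ((c ^ 2 - x ^ 2) / 2)) =
      fun x => (c ^ 4 / 4 + (- c ^ 2 / 2) * x ^ 2 + 1 / 4 * x ^ 4 + 0 * x ^ 6) by ext; ring, int_poly]
    ring
  · intro x hx hxc
    have hd := QQ_cos_sub hx hxc le_rfl hc
    exact (hd.mul hd (by linarith) (by linarith) (by linarith) (by linarith)).mono (by linarith)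

lemma QQw {c : ℝ} (h0 : 0 ≤ c) (hc : c ≤ 1 / 2) {x : ℝ} (hx : 0 ≤ x) (hxc : x ≤ c) : QQ (c ^ 2 / 2) (1 - Real.cos x) (x ^ 2 / 2) := by
  simpa using QQ_cos_sub le_rfl hx hxc hc

lemma IB_bd {c : ℝ} (h0 : 0 ≤ c) (hc : c ≤ 1 / 2) : QQ (2 * c ^ 2) (IB c) (c ^ 7 / 105) := by
  have hs := csq h0 hc
  have hp := sq_nonneg c
  have := int_QQ (k := 2 * c ^ 2) h0 (f := fun x => (1 - Real.cos x) * ((Real.cos x - Real.cos c) * (Real.cos x - Real.cos c)))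
    (f0 := fun x => x ^ 2 / 2 * ((c ^ 2 - x ^ 2) / 2 * ((c ^ 2 - x ^ 2) / 2))) (by fun_prop) (by fun_prop) ?_
  · refine Eq.mp (congrArg _ ?_) this
    rw [show (fun x : ℝ => x ^ 2 / 2 * ((c ^ 2 - x ^ 2) / 2 * ((c ^ 2 - x ^ 2) / 2))) =
      fun x => (0 + (c ^ 4 / 8) * x ^ 2 + (- c ^ 2 / 4) * x ^ 4 + 1 / 8 * x ^ 6) by ext; ring, int_poly]
    ring
  · intro x hx hxc
    have hd := QQ_cos_sub hx hxc le_rfl hc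
    have hw := QQw h0 hc hx hxc
    have hdd := hd.mul hd (by linarith) (by linarith) (by linarith) (by linarith)
    exact (hw.mul hdd (by linarith) (by linarith) (by linarith) (by linarith)).mono (by linarith)

lemma IE_bd {c : ℝ} (h0 : 0 ≤ c) (hc : c ≤ 1 / 2) : QQ (2 * c ^ 2) (IE c) (c ^ 5 / 15) := by
  have hs := csq h0 hc
  have hp := sq_nonneg c
  have := int_QQ (k := 2 * c ^ 2) h0 (f := fun x => (Real.sin x * Real.sin x) * (Real.cos x - Real.cos c))
    (f0 := fun x => (x * x) * ((c ^ 2 - x ^ 2) / 2)) (by fun_prop) (by fun_prop) ?_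
  · refine Eq.mp (congrArg _ ?_) this
    rw [show (fun x : ℝ => (x * x) * ((c ^ 2 - x ^ 2) / 2)) =
      fun x => (0 + (c ^ 2 / 2) * x ^ 2 + (- 1 / 2) * x ^ 4 + 0 * x ^ 6) by ext; ring, int_poly]
    ring
  · intro x hx hxc
    have hd := QQ_cos_sub hx hxc le_rfl hc
    have hw := QQ_sin hx hxc hc
    have hdd := hw.mul hw (by linarith) (by linarith) (by linarith) (by linarith)
    exact (hdd.mul hd (by linarith) (by linarith) (by linarith) (by linarith)).mono (by linarith)

lemma IG_bd {c : ℝ} (h0 : 0 ≤ c) (hc : c ≤ 1 / 2) : QQ (2 * c ^ 2) (IG c) (c ^ 3 / 3) := by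
  have hs := csq h0 hc
  have hp := sq_nonneg c
  have := int_QQ (k := 2 * c ^ 2) h0 (f := fun x => (Real.cos x * Real.cos x) * (Real.cos x - Real.cos c))
    (f0 := fun x => (1 * 1) * ((c ^ 2 - x ^ 2) / 2)) (by fun_prop) (by fun_prop) ?_
  · refine Eq.mp (congrArg _ ?_) this
    rw [show (fun x : ℝ => (1 * 1) * ((c ^ 2 - x ^ 2) / 2)) =
      fun x => (c ^ 2 / 2 + (-1 / 2) * x ^ 2 + 0 * x ^ 4 + 0 * x ^ 6) by ext; ring, int_poly]
    ring
  · intro x hx hxc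
    have hd := QQ_cos_sub hx hxc le_rfl hc
    have hw : QQ (c ^ 2 / 2) (Real.cos x) 1 := by
      refine ⟨by norm_num, ?_, Real.cos_le_one x⟩
      have h1 := Real.one_sub_sq_div_two_le_cos (x := x)
      have h2 : x ^ 2 ≤ c ^ 2 := by gcongr
      linarith
    have hdd := hw.mul hw (by linarith) (by linarith) (by linarith) (by linarith)
    exact (hdd.mul hd (by linarith) (by linarith) (by linarith) (by linarith)).mono (by linarith)

lemma ID_bd {c : ℝ} (h0 : 0 ≤ c) (hc : c ≤ 1 / 2) : |ID c| ≤ c ^ 4 / 4 * IA c := by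
  have key : ∀ x ∈ Set.Icc 0 c, 0 ≤ (1 - Real.cos x) *
      ((1 - Real.cos x) * ((Real.cos x - Real.cos c) * (Real.cos x - Real.cos c))) ∧
      (1 - Real.cos x) *
      ((1 - Real.cos x) * ((Real.cos x - Real.cos c) * (Real.cos x - Real.cos c))) ≤
      c ^ 4 / 4 * ((Real.cos x - Real.cos c) * (Real.cos x - Real.cos c)) := by
    intro x hx
    have h1 : 0 ≤ 1 - Real.cos x := by linarith [Real.cos_le_one x]
    have h2 : 1 - Real.cos x ≤ c ^ 2 / 2 := by
      have h1 := Real.one_sub_sq_div_two_le_cos (x := x)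
      have h2 : x ^ 2 ≤ c ^ 2 := pow_le_pow_left₀ hx.1 hx.2 2
      linarith
    have h3 := mul_self_nonneg (Real.cos x - Real.cos c)
    refine ⟨by positivity, ?_⟩
    rw [← mul_assoc]
    refine mul_le_mul_of_nonneg_right ?_ h3
    calc _ ≤ c ^ 2 / 2 * (c ^ 2 / 2) := mul_le_mul h2 h2 h1 (by positivity)
      _ = _ := by ring
  rw [ID, abs_of_nonneg (intervalIntegral.integral_nonneg h0 fun x hx => (key x hx).1), IA,
    ← intervalIntegral.integral_const_mul]
  exact intervalIntegral.integral_mono_on h0 (Continuous.intervalIntegrable (by fun_prop) _ _)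
    (Continuous.intervalIntegrable (by fun_prop) _ _) fun x hx => (key x hx).2

end bounds

/-- `f = 1 + O(c²)` along `l`. -/
def NN (l : Filter ℝ) (c f : ℝ → ℝ) : Prop := (fun x => f x - 1) =O[l] fun x => c x ^ 2

section asym
variable {l : Filter ℝ} {c : ℝ → ℝ}

lemma NN.tendsto (hc : Tendsto c l (nhds 0)) {f : ℝ → ℝ} (h : NN l c f) : Tendsto f l (nhds 1) := by
  have h2 : Tendsto (fun x => c x ^ 2) l (nhds 0) := by simpa using hc.pow 2
  have := (h.trans_tendsto h2).add_const 1
  simpa using this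

lemma NN.mul (hc : Tendsto c l (nhds 0)) {f g : ℝ → ℝ} (hf : NN l c f) (hg : NN l c g) :
    NN l c (fun x => f x * g x) := by
  have h1 : (fun x => f x * (g x - 1)) =O[l] fun x => 1 * c x ^ 2 :=
    ((hf.tendsto hc).isBigO_one ℝ).mul hg
  simp only [one_mul] at h1
  refine (h1.add hf).congr_left fun x => by ring

lemma NN.rpow (hc : Tendsto c l (nhds 0)) {f : ℝ → ℝ} (hf : NN l c f) (p : ℝ) :
    NN l c (fun x => f x ^ p) := by
  have hd : DifferentiableAt ℝ (fun y : ℝ => y ^ p) 1 :=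
    (Real.hasDerivAt_rpow_const (Or.inl one_ne_zero)).differentiableAt
  have := (hd.isBigO_sub.comp_tendsto (hf.tendsto hc))
  refine IsBigO.trans ?_ hf
  simpa [Function.comp_def] using this

lemma NN_of_QQ {I : ℝ → ℝ} {K : ℝ} {n : ℕ} (hK : 0 < K) (hc0 : ∀ᶠ x in l, 0 < c x)
    (h : ∀ᶠ x in l, QQ (2 * c x ^ 2) (I (c x)) (K * c x ^ n)) :
    NN l c (fun x => I (c x) / (K * c x ^ n)) := by
  refine IsBigO.of_bound 2 ?_
  filter_upwards [hc0, h] with x hx ⟨h1, h2, h3⟩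
  have hp : 0 < K * c x ^ n := by positivity
  have e1 : 1 - 2 * c x ^ 2 ≤ I (c x) / (K * c x ^ n) := by rwa [le_div_iff₀ hp]
  have e2 : I (c x) / (K * c x ^ n) ≤ 1 := by rwa [div_le_one hp]
  rw [Real.norm_eq_abs, Real.norm_eq_abs, abs_of_nonneg (sq_nonneg (c x)), abs_le]
  constructor <;> nlinarith [sq_nonneg (c x)]

lemma NN_final (hc : Tendsto c l (nhds 0)) (hc0 : ∀ᶠ x in l, 0 < c x) {t r Z q : ℝ → ℝ} (K p : ℝ)
    (hr : NN l c r) (hq : NN l c q) (ht : ∀ᶠ x in l, t x = c x ^ 2 / 14 * r x)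
    (hZ : ∀ᶠ x in l, Z x = K * (c x ^ 2) ^ p * q x) :
    (fun x => Z x - K * 14 ^ p * t x ^ p) =O[l] fun x => t x ^ (p + 1) := by
  have hrpos : ∀ᶠ x in l, 0 < r x := (hr.tendsto hc).eventually (lt_mem_nhds one_pos)
  have h1 : (fun x => q x - r x ^ p) =O[l] fun x => c x ^ 2 :=
    (IsBigO.sub hq (hr.rpow hc p)).congr_left fun x => by ring
  have h2 : (fun x => (K * (c x ^ 2) ^ p) * (q x - r x ^ p)) =O[l]
      fun x => (c x ^ 2) ^ p * c x ^ 2 :=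
    ((isBigO_refl (fun x => (c x ^ 2) ^ p) l).const_mul_left K).mul h1
  have h3 : (fun x => (c x ^ 2) ^ p * c x ^ 2) =O[l] fun x => t x ^ (p + 1) := by
    have h4 : (fun x => 14 ^ (p + 1) * (t x ^ (p + 1) * r x ^ (-(p + 1)))) =O[l]
        fun x => t x ^ (p + 1) * 1 :=
      ((isBigO_refl (fun x => t x ^ (p + 1)) l).mul
        (((hr.rpow hc (-(p + 1))).tendsto hc).isBigO_one ℝ)).const_mul_left _
    simp only [mul_one] at h4
    refine h4.congr' ?_ EventuallyEq.rfl
    filter_upwards [hc0, hrpos, ht] with x hx hrx htx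
    have hcx : 0 < c x ^ 2 := by positivity
    rw [htx, Real.mul_rpow (by positivity) hrx.le, Real.rpow_neg hrx.le,
      Real.div_rpow hcx.le (by norm_num), Real.rpow_add_one hcx.ne']
    have : (0:ℝ) < 14 ^ (p + 1) := by positivity
    have : (0:ℝ) < r x ^ (p + 1) := by positivity
    field_simp
  refine (h2.trans h3).congr' ?_ EventuallyEq.rfl
  filter_upwards [hc0, hrpos, ht, hZ] with x hx hrx htx hZx
  have hcx : 0 < c x ^ 2 := by positivity
  rw [hZx, htx, Real.mul_rpow (by positivity) hrx.le, Real.div_rpow hcx.le (by norm_num)]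
  have : (0:ℝ) < 14 ^ p := by positivity
  field_simp

end asym

/-- rewriting of the basic integrals. -/
lemma calF_two (N : ℕ) {ψ c : ℝ} (hc : Cpsi ψ = c) (h : Real.cos ψ = - Real.sin ψ * Real.cos c) :
    calF N 2 ψ = Real.sin ψ ^ 2 / (2 * Real.pi) * ∫ x in (0:ℝ)..c,
      Real.cos (N * x) * ((Real.cos x - Real.cos c) * (Real.cos x - Real.cos c)) := by
  have hG : Real.Gamma (2 + 1) = 2 := by
    have := Real.Gamma_nat_eq_factorial 2
    norm_num at this ⊢
  rw [calF, hc, hG, ← intervalIntegral.integral_const_mul, ← intervalIntegral.integral_const_mul]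
  congr 1
  ext x
  rw [Real.rpow_two, h]
  have := Real.pi_ne_zero
  field_simp
  ring

lemma calF_one (N : ℕ) {ψ c : ℝ} (hc : Cpsi ψ = c) (h : Real.cos ψ = - Real.sin ψ * Real.cos c) :
    calF N 1 ψ = Real.sin ψ / Real.pi * ∫ x in (0:ℝ)..c,
      Real.cos (N * x) * (Real.cos x - Real.cos c) := by
  have hG : Real.Gamma (1 + 1) = 1 := by
    have := Real.Gamma_nat_eq_factorial 1
    norm_num at this ⊢
  rw [calF, hc, hG, ← intervalIntegral.integral_const_mul, ← intervalIntegral.integral_const_mul]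
  congr 1
  ext x
  rw [Real.rpow_one, h]
  have := Real.pi_ne_zero
  field_simp
  ring

section vals

lemma F02 {ψ c : ℝ} (hc : Cpsi ψ = c) (h : Real.cos ψ = - Real.sin ψ * Real.cos c) : calF 0 2 ψ = Real.sin ψ ^ 2 / (2 * Real.pi) * IA c := by
  rw [calF_two 0 hc h, IA]; simp

lemma F12 {ψ c : ℝ} (hc : Cpsi ψ = c) (h : Real.cos ψ = - Real.sin ψ * Real.cos c) : calF 0 2 ψ - calF 1 2 ψ = Real.sin ψ ^ 2 / (2 * Real.pi) * IB c := by
  rw [calF_two 0 hc h, calF_two 1 hc h, IB, ← mul_sub, ← intervalIntegral.integral_sub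
    (Continuous.intervalIntegrable (by fun_prop) _ _)
    (Continuous.intervalIntegrable (by fun_prop) _ _)]
  congr 2; ext x; simp; ring

lemma F22 {ψ c : ℝ} (hc : Cpsi ψ = c) (h : Real.cos ψ = - Real.sin ψ * Real.cos c) : 3 * calF 0 2 ψ + calF 2 2 ψ - 4 * calF 1 2 ψ =
    Real.sin ψ ^ 2 / (2 * Real.pi) * (2 * ID c) := by
  rw [calF_two 0 hc h, calF_two 1 hc h, calF_two 2 hc h, ID, mul_left_comm 3, mul_left_comm 4,
    ← mul_add, ← mul_sub]
  congr 1
  simp only [← intervalIntegral.integral_const_mul]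
  rw [← intervalIntegral.integral_add
    (Continuous.intervalIntegrable (by fun_prop) _ _)
    (Continuous.intervalIntegrable (by fun_prop) _ _), ← intervalIntegral.integral_sub
    (Continuous.intervalIntegrable (by fun_prop) _ _)
    (Continuous.intervalIntegrable (by fun_prop) _ _)]
  congr 1; ext x; simp [Real.cos_two_mul]; ring

lemma F1m {ψ c : ℝ} (hc : Cpsi ψ = c) (h : Real.cos ψ = - Real.sin ψ * Real.cos c) : calF 0 1 ψ - calF 2 1 ψ = Real.sin ψ / Real.pi * (2 * IE c) := by
  rw [calF_one 0 hc h, calF_one 2 hc h, IE, ← mul_sub, ← intervalIntegral.integral_sub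
    (Continuous.intervalIntegrable (by fun_prop) _ _)
    (Continuous.intervalIntegrable (by fun_prop) _ _)]
  congr 1
  rw [← intervalIntegral.integral_const_mul]
  congr 1; ext x; simp only [← pow_two, Real.sin_sq]; simp [Real.cos_two_mul]; ring

lemma F1p {ψ c : ℝ} (hc : Cpsi ψ = c) (h : Real.cos ψ = - Real.sin ψ * Real.cos c) : calF 0 1 ψ + calF 2 1 ψ = Real.sin ψ / Real.pi * (2 * IG c) := by
  rw [calF_one 0 hc h, calF_one 2 hc h, IG, ← mul_add, ← intervalIntegral.integral_add
    (Continuous.intervalIntegrable (by fun_prop) _ _)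
    (Continuous.intervalIntegrable (by fun_prop) _ _)]
  congr 1
  rw [← intervalIntegral.integral_const_mul]
  congr 1; ext x; simp [Real.cos_two_mul]; ring


lemma u_val {ψ c : ℝ} (hc : Cpsi ψ = c) (h : Real.cos ψ = - Real.sin ψ * Real.cos c)
    (hs : 0 < Real.sin ψ) (hA : 0 < IA c) : 1 - uFun ψ = IB c / IA c := by
  have h1 := F02 hc h
  have h2 := F12 hc h
  have hpi := Real.pi_pos
  have h0 : 0 < calF 0 2 ψ := by rw [h1]; positivity
  rw [uFun, eq_div_iff hA.ne', one_sub_div h0.ne', h2, h1]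
  field_simp

lemma Y_val {ψ c : ℝ} (hc : Cpsi ψ = c) (h : Real.cos ψ = - Real.sin ψ * Real.cos c)
    (hs : 0 < Real.sin ψ) (hA : 0 < IA c) : Yfun ψ - (2 * uFun ψ - 1) = ID c / IA c := by
  have h1 := F02 hc h
  have h2 := F22 hc h
  have hpi := Real.pi_pos
  have h0 : 0 < calF 0 2 ψ := by rw [h1]; positivity
  have e : Yfun ψ - (2 * uFun ψ - 1) =
      (3 * calF 0 2 ψ + calF 2 2 ψ - 4 * calF 1 2 ψ) / (2 * calF 0 2 ψ) := by
    rw [Yfun, uFun]; field_simp; ring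
  rw [e, h2, h1]
  field_simp

lemma sqrt_val {ψ c : ℝ} (hc : Cpsi ψ = c) (h : Real.cos ψ = - Real.sin ψ * Real.cos c)
    (hs : 0 < Real.sin ψ) (hA : 0 < IA c) : Real.sqrt (2 * calF 0 2 ψ) = Real.sin ψ / Real.pi * Real.sqrt (Real.pi * IA c) := by
  have hpi := Real.pi_pos
  rw [F02 hc h, show 2 * (Real.sin ψ ^ 2 / (2 * Real.pi) * IA c) =
    (Real.sin ψ / Real.pi) ^ 2 * (Real.pi * IA c) by field_simp,
    Real.sqrt_mul (by positivity), Real.sqrt_sq (by positivity)]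

lemma Z_val {ψ c : ℝ} (hc : Cpsi ψ = c) (h : Real.cos ψ = - Real.sin ψ * Real.cos c)
    (hs : 0 < Real.sin ψ) (hA : 0 < IA c) : Zfun ψ = IE c / Real.sqrt (Real.pi * IA c) := by
  have hpi := Real.pi_pos
  have : 0 < Real.sqrt (Real.pi * IA c) := by positivity
  rw [Zfun, sqrt_val hc h hs hA, F1m hc h]
  field_simp

lemma Zp_val {ψ c : ℝ} (hc : Cpsi ψ = c) (h : Real.cos ψ = - Real.sin ψ * Real.cos c)
    (hs : 0 < Real.sin ψ) (hA : 0 < IA c) : Zperp ψ = IG c / Real.sqrt (Real.pi * IA c) := by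
  have hpi := Real.pi_pos
  have : 0 < Real.sqrt (Real.pi * IA c) := by positivity
  rw [Zperp, sqrt_val hc h hs hA, F1p hc h]
  field_simp

end vals

lemma tendsto_C : Tendsto Cpsi (nhdsWithin (3 * Real.pi / 4) (Set.Iio (3 * Real.pi / 4))) (nhds 0) ∧
    ∀ᶠ ψ in nhdsWithin (3 * Real.pi / 4) (Set.Iio (3 * Real.pi / 4)),
      0 < Cpsi ψ ∧ 0 < Real.sin ψ ∧ Real.cos ψ = - Real.sin ψ * Real.cos (Cpsi ψ) := by
  have hpi := Real.pi_pos
  have hs34 : Real.sin (3 * Real.pi / 4) = Real.sqrt 2 / 2 := by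
    rw [show 3 * Real.pi / 4 = Real.pi - Real.pi / 4 by ring, Real.sin_pi_sub, Real.sin_pi_div_four]
  have hc34 : Real.cos (3 * Real.pi / 4) = - (Real.sqrt 2 / 2) := by
    rw [show 3 * Real.pi / 4 = Real.pi - Real.pi / 4 by ring, Real.cos_pi_sub, Real.cos_pi_div_four]
  have hmem : Set.Ioo (Real.pi / 2) (3 * Real.pi / 4) ∈
      nhdsWithin (3 * Real.pi / 4) (Set.Iio (3 * Real.pi / 4)) :=
    Ioo_mem_nhdsLT (by linarith)
  have hCe : ∀ ψ ∈ Set.Ioo (Real.pi / 2) (3 * Real.pi / 4),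
      Cpsi ψ = Real.arccos (-(Real.cos ψ / Real.sin ψ)) := by
    intro ψ hψ
    rw [Cpsi, if_neg (by have := hψ.1; linarith)]
  constructor
  · have hcont : ContinuousAt (fun ψ => Real.arccos (-(Real.cos ψ / Real.sin ψ))) (3 * Real.pi / 4) := by
      refine Real.continuous_arccos.continuousAt.comp (ContinuousAt.neg (ContinuousAt.div
        Real.continuous_cos.continuousAt Real.continuous_sin.continuousAt ?_))
      rw [hs34]; positivity
    have h1 := hcont.tendsto.mono_left (nhdsWithin_le_nhds (s := Set.Iio (3 * Real.pi / 4)))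
    have hv : Real.arccos (-(Real.cos (3 * Real.pi / 4) / Real.sin (3 * Real.pi / 4))) = 0 := by
      rw [hs34, hc34, neg_div, div_self (by positivity)]; simp
    rw [hv] at h1
    refine h1.congr' ?_
    filter_upwards [hmem] with ψ hψ
    exact (hCe ψ hψ).symm
  · filter_upwards [hmem] with ψ hψ
    have hψ1 := hψ.1
    have hψ2 := hψ.2
    have hsin : 0 < Real.sin ψ := Real.sin_pos_of_pos_of_lt_pi (by linarith) (by linarith)
    have hcos : Real.cos ψ < 0 := Real.cos_neg_of_pi_div_two_lt_of_lt hψ1 (by linarith)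
    have hsum : - Real.cos ψ < Real.sin ψ := by
      have h1 : 0 < Real.sin (ψ + Real.pi / 4) :=
        Real.sin_pos_of_pos_of_lt_pi (by linarith) (by linarith)
      rw [Real.sin_add, Real.sin_pi_div_four, Real.cos_pi_div_four] at h1
      have : 0 < Real.sqrt 2 := by positivity
      nlinarith
    have hlt : -(Real.cos ψ / Real.sin ψ) < 1 := by
      rw [← neg_div, div_lt_one hsin]; exact hsum
    have hge : 0 ≤ -(Real.cos ψ / Real.sin ψ) := by
      rw [← neg_div]; exact div_nonneg (by linarith) hsin.le
    rw [hCe ψ hψ]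
    refine ⟨Real.arccos_pos.2 hlt, hsin, ?_⟩
    rw [Real.cos_arccos (by linarith) hlt.le]
    field_simp

/-- As `ψ → (3π/4)⁻` (so `u(ψ) → 1`): `Y = 2u - 1 + O((1-u)²)`,
`Z = (14^{5/4}/√(30π))(1-u)^{5/4} + O((1-u)^{9/4})`, and
`Z_⊥ = (√5·14^{1/4}/√(6π))(1-u)^{1/4} + O((1-u)^{5/4})`. -/
theorem YZ_expansion_collimation :
    Tendsto uFun (nhdsWithin (3 * Real.pi / 4) (Set.Iio (3 * Real.pi / 4))) (nhds 1) ∧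
    ((fun ψ => Yfun ψ - (2 * uFun ψ - 1))
      =O[nhdsWithin (3 * Real.pi / 4) (Set.Iio (3 * Real.pi / 4))]
        fun ψ => (1 - uFun ψ) ^ 2) ∧
    ((fun ψ => Zfun ψ - (14 : ℝ) ^ ((5 : ℝ) / 4) / Real.sqrt (30 * Real.pi) *
        (1 - uFun ψ) ^ ((5 : ℝ) / 4))
      =O[nhdsWithin (3 * Real.pi / 4) (Set.Iio (3 * Real.pi / 4))]
        fun ψ => (1 - uFun ψ) ^ ((9 : ℝ) / 4)) ∧
    ((fun ψ => Zperp ψ - Real.sqrt 5 * (14 : ℝ) ^ ((1 : ℝ) / 4) / Real.sqrt (6 * Real.pi) *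
        (1 - uFun ψ) ^ ((1 : ℝ) / 4))
      =O[nhdsWithin (3 * Real.pi / 4) (Set.Iio (3 * Real.pi / 4))]
        fun ψ => (1 - uFun ψ) ^ ((5 : ℝ) / 4)) := by
  obtain ⟨hc, hev⟩ := tendsto_C
  set l := nhdsWithin (3 * Real.pi / 4) (Set.Iio (3 * Real.pi / 4)) with hl
  have hpi := Real.pi_pos
  have hc0 : ∀ᶠ ψ in l, 0 < Cpsi ψ := hev.mono fun ψ h => h.1
  have hch : ∀ᶠ ψ in l, Cpsi ψ ≤ 1 / 2 :=
    (hc.eventually (gt_mem_nhds (show (0:ℝ) < 1 / 2 by norm_num))).mono fun ψ h => le_of_lt h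
  have nA : NN l Cpsi (fun ψ => IA (Cpsi ψ) / (2 / 15 * Cpsi ψ ^ 5)) := by
    refine NN_of_QQ (by norm_num) hc0 ?_
    filter_upwards [hc0, hch] with ψ h0 h1
    convert IA_bd h0.le h1 using 1; ring
  have nB : NN l Cpsi (fun ψ => IB (Cpsi ψ) / (1 / 105 * Cpsi ψ ^ 7)) := by
    refine NN_of_QQ (by norm_num) hc0 ?_
    filter_upwards [hc0, hch] with ψ h0 h1
    convert IB_bd h0.le h1 using 1; ring
  have nE : NN l Cpsi (fun ψ => IE (Cpsi ψ) / (1 / 15 * Cpsi ψ ^ 5)) := by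
    refine NN_of_QQ (by norm_num) hc0 ?_
    filter_upwards [hc0, hch] with ψ h0 h1
    convert IE_bd h0.le h1 using 1; ring
  have nG : NN l Cpsi (fun ψ => IG (Cpsi ψ) / (1 / 3 * Cpsi ψ ^ 3)) := by
    refine NN_of_QQ (by norm_num) hc0 ?_
    filter_upwards [hc0, hch] with ψ h0 h1
    convert IG_bd h0.le h1 using 1; ring
  have hA : ∀ᶠ ψ in l, 0 < IA (Cpsi ψ) := by
    filter_upwards [hc0, hch] with ψ h0 h1
    have h2 := (IA_bd h0.le h1).2.1
    have h3 := csq h0.le h1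
    have : 0 < (1 - 2 * Cpsi ψ ^ 2) * (2 * Cpsi ψ ^ 5 / 15) :=
      mul_pos (by linarith) (by positivity)
    linarith
  have nR := nB.mul hc (nA.rpow hc (-1))
  have ht : ∀ᶠ ψ in l, 1 - uFun ψ = Cpsi ψ ^ 2 / 14 * (IB (Cpsi ψ) / (1 / 105 * Cpsi ψ ^ 7) *
      (IA (Cpsi ψ) / (2 / 15 * Cpsi ψ ^ 5)) ^ (-1 : ℝ)) := by
    filter_upwards [hc0, hA, hev] with ψ h0 h1 h2
    rw [u_val rfl h2.2.2 h2.2.1 h1, Real.rpow_neg_one]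
    field_simp
    ring
  have hsq : ∀ᶠ ψ in l, Real.sqrt (Real.pi * IA (Cpsi ψ)) =
      Real.sqrt (2 * Real.pi / 15) * (Cpsi ψ ^ 2) ^ ((5:ℝ) / 4) *
        (IA (Cpsi ψ) / (2 / 15 * Cpsi ψ ^ 5)) ^ ((1 : ℝ) / 2) := by
    filter_upwards [hc0, hA] with ψ h0 h1
    rw [← Real.sqrt_eq_rpow, show ((5:ℝ) / 4) = 5 / 2 * (1 / 2) by norm_num, Real.rpow_mul (by positivity),
      ← Real.sqrt_eq_rpow, ← Real.sqrt_mul (by positivity), ← Real.sqrt_mul (by positivity),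
      ← Real.rpow_natCast_mul h0.le, show ((2:ℕ):ℝ) * (5 / 2) = (5:ℕ) by norm_num, Real.rpow_natCast]
    congr 1
    field_simp
  have hu : Tendsto (fun ψ => 1 - uFun ψ) l (nhds 0) := by
    have h1 : Tendsto (fun ψ => Cpsi ψ ^ 2 / 14) l (nhds 0) := by
      simpa using (hc.pow 2).div_const 14
    have h2 := h1.mul (nR.tendsto hc)
    rw [zero_mul] at h2
    exact h2.congr' (ht.mono fun ψ h => h.symm)
  have n0 : ∀ ψ, 0 < Cpsi ψ → 0 < IA (Cpsi ψ) →
      0 < (IA (Cpsi ψ) / (2 / 15 * Cpsi ψ ^ 5)) := fun ψ h h' => by positivity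
  refine ⟨?_, ?_, ?_, ?_⟩
  · simpa using hu.const_sub 1
  · have h1 : (fun ψ => Yfun ψ - (2 * uFun ψ - 1)) =O[l] fun ψ => Cpsi ψ ^ 4 := by
      refine IsBigO.of_bound 1 ?_
      filter_upwards [hc0, hch, hA, hev] with ψ h0 hh h1 h2
      rw [Y_val rfl h2.2.2 h2.2.1 h1, Real.norm_eq_abs, abs_div, abs_of_pos h1, Real.norm_eq_abs,
        div_le_iff₀ h1, abs_of_pos (by positivity : 0 < Cpsi ψ ^ 4)]
      have := ID_bd h0.le hh
      have : 0 < Cpsi ψ ^ 4 * IA (Cpsi ψ) := by positivity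
      linarith
    have h2 := NN_final hc hc0 (Z := fun ψ => Cpsi ψ ^ 2) (q := fun _ => 1) 1 1 nR
      (by simp only [NN, sub_self]; exact isBigO_zero _ _) ht (by simp)
    have h3 : (fun ψ => Cpsi ψ ^ 2) =O[l] fun ψ => 1 - uFun ψ := by
      have hb : (fun ψ => (1 - uFun ψ) ^ (1 + 1 : ℝ)) =O[l] fun ψ => 1 - uFun ψ := by
        have : (fun ψ => (1 - uFun ψ) * (1 - uFun ψ)) =O[l] fun ψ => 1 * (1 - uFun ψ) :=
          (hu.isBigO_one ℝ).mul (isBigO_refl _ _)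
        simpa [show (1:ℝ) + 1 = 2 by norm_num, pow_two] using this
      have := (h2.trans hb).add ((isBigO_refl (fun ψ => 1 - uFun ψ) l).const_mul_left 14)
      refine this.congr_left fun ψ => by simp
    refine h1.trans ((h3.pow 2).congr_left fun ψ => by ring)
  · have := NN_final hc hc0 (Z := Zfun) (1 / Real.sqrt (30 * Real.pi)) (5 / 4) nR
      (nE.mul hc (nA.rpow hc (-(1 / 2)))) ht ?_
    · convert this using 2
      · ring
      · norm_num
    · filter_upwards [hc0, hA, hev, hsq] with ψ h0 h1 h2 h3
      have ha := n0 ψ h0 h1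
      rw [Z_val rfl h2.2.2 h2.2.1 h1, h3, Real.rpow_neg ha.le]
      have hX : Cpsi ψ ^ 5 = (Cpsi ψ ^ 2) ^ ((5:ℝ) / 4) * (Cpsi ψ ^ 2) ^ ((5:ℝ) / 4) := by
        rw [← Real.rpow_add (by positivity), ← Real.rpow_natCast_mul h0.le, ← Real.rpow_natCast]
        norm_num
      have hk : Real.sqrt (30 * Real.pi) = 15 * Real.sqrt (2 * Real.pi / 15) := by
        rw [show 30 * Real.pi = 15 ^ 2 * (2 * Real.pi / 15) by ring, Real.sqrt_mul (by positivity),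
          Real.sqrt_sq (by norm_num)]
      have hb : 0 < (IA (Cpsi ψ) / (2 / 15 * Cpsi ψ ^ 5)) ^ ((1 : ℝ) / 2) := by positivity
      generalize (IA (Cpsi ψ) / (2 / 15 * Cpsi ψ ^ 5)) ^ ((1 : ℝ) / 2) = w at *
      have hy : 0 < (Cpsi ψ ^ 2) ^ ((5:ℝ) / 4) := by positivity
      rw [hk, hX]
      generalize (Cpsi ψ ^ 2) ^ ((5:ℝ) / 4) = y at *
      have : 0 < Real.sqrt (2 * Real.pi / 15) := by positivity
      generalize Real.sqrt (2 * Real.pi / 15) = v at *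
      field_simp
  · have := NN_final hc hc0 (Z := Zperp) (Real.sqrt 5 / Real.sqrt (6 * Real.pi)) (1 / 4) nR
      (nG.mul hc (nA.rpow hc (-(1 / 2)))) ht ?_
    · convert this using 2
      · ring
      · norm_num
    · filter_upwards [hc0, hA, hev, hsq] with ψ h0 h1 h2 h3
      have ha := n0 ψ h0 h1
      rw [Zp_val rfl h2.2.2 h2.2.1 h1, h3, Real.rpow_neg ha.le]
      have hX : Cpsi ψ ^ 3 = (Cpsi ψ ^ 2) ^ ((5:ℝ) / 4) * (Cpsi ψ ^ 2) ^ ((1:ℝ) / 4) := by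
        rw [← Real.rpow_add (by positivity), ← Real.rpow_natCast_mul h0.le, ← Real.rpow_natCast]
        norm_num
      have hk : Real.sqrt 5 / Real.sqrt (6 * Real.pi) = 1 / (3 * Real.sqrt (2 * Real.pi / 15)) := by
        rw [div_eq_div_iff (by positivity) (by positivity), mul_left_comm,
          show 6 * Real.pi = 3 ^ 2 * (5 * (2 * Real.pi / 15)) by ring, Real.sqrt_mul (by positivity),
          Real.sqrt_sq (by norm_num), one_mul, Real.sqrt_mul (by norm_num)]
      have hb : 0 < (IA (Cpsi ψ) / (2 / 15 * Cpsi ψ ^ 5)) ^ ((1 : ℝ) / 2) := by positivity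
      generalize (IA (Cpsi ψ) / (2 / 15 * Cpsi ψ ^ 5)) ^ ((1 : ℝ) / 2) = w at *
      have hy : 0 < (Cpsi ψ ^ 2) ^ ((5:ℝ) / 4) := by positivity
      have hz : 0 < (Cpsi ψ ^ 2) ^ ((1:ℝ) / 4) := by positivity
      rw [hk, hX]
      generalize (Cpsi ψ ^ 2) ^ ((5:ℝ) / 4) = y at *
      generalize (Cpsi ψ ^ 2) ^ ((1:ℝ) / 4) = z at *
      have : 0 < Real.sqrt (2 * Real.pi / 15) := by positivity
      generalize Real.sqrt (2 * Real.pi / 15) = v at *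
      field_simp
end

section
/- Let s > 0 and let N ≥ 0 be an integer. The Fermi integral φ_s is infinitely differentiable on ℝ, and for every A ∈ ℝ and every B with 0 ≤ B < π the series Σ_{n=0}^∞ [ φ_s^{(N+2n)}(A) / (n! (N+n)!) ] (B/2)^{N+2n} converges and its sum equals 𝓘_N^s(A,B), where φ_s^{(j)} denotes the j-th derivative of φ_s. -/
open MeasureTheory Set

/-! ### The trigonometric integrals -/

lemma trig_step (m : ℤ) (k : ℕ) :
    (∫ θ in (0 : ℝ)..Real.pi, Real.cos (m * θ) * Real.cos θ ^ (k + 1)) =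
      ((∫ θ in (0 : ℝ)..Real.pi, Real.cos ((m + 1 : ℤ) * θ) * Real.cos θ ^ k) +
        ∫ θ in (0 : ℝ)..Real.pi, Real.cos ((m - 1 : ℤ) * θ) * Real.cos θ ^ k) / 2 := by
  rw [← intervalIntegral.integral_add (Continuous.intervalIntegrable (by fun_prop) _ _)
    (Continuous.intervalIntegrable (by fun_prop) _ _), ← intervalIntegral.integral_div]
  congr 1
  ext θ
  push_cast
  rw [add_mul, sub_mul, one_mul, Real.cos_add, Real.cos_sub]
  ring

lemma trig_base (m : ℤ) :
    (∫ θ in (0 : ℝ)..Real.pi, Real.cos (m * θ) * Real.cos θ ^ 0) =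
      if m = 0 then Real.pi else 0 := by
  split_ifs with h
  · subst h
    simp
  · have h' : (m : ℝ) ≠ 0 := by exact_mod_cast h
    simp only [pow_zero, mul_one]
    rw [intervalIntegral.integral_comp_mul_left (fun x => Real.cos x) h']
    simp [Real.sin_int_mul_pi]

lemma trig_zero (k : ℕ) : ∀ m : ℤ, (∀ j : ℕ, m ≠ k - 2 * j) →
    (∫ θ in (0 : ℝ)..Real.pi, Real.cos (m * θ) * Real.cos θ ^ k) = 0 := by
  induction k with
  | zero =>
    intro m h
    rw [trig_base, if_neg]
    simpa using h 0
  | succ k ih =>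
    intro m h
    rw [trig_step, ih, ih]
    · simp
    · intro j hj
      apply h j
      push_cast
      linarith
    · intro j hj
      apply h (j + 1)
      push_cast
      linarith

lemma trig_val (k : ℕ) : ∀ (m : ℤ) (j : ℕ), m = k - 2 * j →
    (∫ θ in (0 : ℝ)..Real.pi, Real.cos (m * θ) * Real.cos θ ^ k) =
      Real.pi * (k.choose j) / 2 ^ k := by
  induction k with
  | zero =>
    intro m j h
    rw [trig_base]
    rcases j with _ | j
    · rw [if_pos (by simpa using h)]
      simp
    · rw [if_neg (by push_cast at h; omega)]
      simp
  | succ k ih =>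
    intro m j h
    rw [trig_step, ih (m - 1) j (by push_cast at h; linarith)]
    rcases j with _ | j
    · rw [trig_zero k (m + 1) (by intro j; push_cast at h; omega)]
      simp [pow_succ]
      ring
    · rw [ih (m + 1) j (by push_cast at h; linarith), Nat.choose_succ_succ]
      push_cast
      ring

/-! ### Complex extension -/

/-- The complex extension of the (unnormalized) Fermi integral. -/
noncomputable def fermiC (s : ℝ) (z : ℂ) : ℂ :=
  ((1 / Real.Gamma s : ℝ) : ℂ) *
    ∫ t in Set.Ioi (0 : ℝ), ((t ^ (s - 1) : ℝ) : ℂ) / (Complex.exp (t - z) + 1)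

lemma fermiC_ofReal (s x : ℝ) : fermiC s x = fermi s x := by
  unfold fermiC fermi
  rw [Complex.ofReal_mul, ← integral_complex_ofReal]
  congr 2
  ext t
  push_cast
  rfl

lemma norm_bound {w : ℝ} {z : ℂ} {η : ℝ} (hη : η < Real.pi) (hz : |z.im| < η) :
    Real.cos (η / 2) * (1 + Real.exp (w - z.re)) ≤ ‖Complex.exp (w - z) + 1‖ := by
  have h0 := abs_nonneg z.im
  have hc : 0 < Real.cos (η / 2) := Real.cos_pos_of_mem_Ioo ⟨by linarith, by linarith⟩
  have hc2 : Real.cos (η / 2) ≤ Real.cos (z.im / 2) := by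
    rw [← Real.cos_abs (z.im / 2), abs_div, abs_two]
    exact Real.cos_le_cos_of_nonneg_of_le_pi (by linarith) (by linarith) (by linarith)
  set r := Real.exp (w - z.re) with hr
  have hr0 : 0 < r := Real.exp_pos _
  have hcy : Real.cos z.im = 2 * Real.cos (z.im / 2) ^ 2 - 1 := by
    rw [← Real.cos_two_mul]
    congr 1
    ring
  have hsq : ‖Complex.exp (w - z) + 1‖ ^ 2 = r ^ 2 + 2 * r * Real.cos z.im + 1 := by
    rw [← Complex.normSq_eq_norm_sq, Complex.normSq_apply]
    simp only [Complex.add_re, Complex.add_im, Complex.exp_re, Complex.exp_im, Complex.sub_re,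
      Complex.sub_im, Complex.ofReal_re, Complex.ofReal_im, Complex.one_re, Complex.one_im,
      zero_sub, Real.cos_neg, Real.sin_neg, ← hr]
    nlinarith [Real.sin_sq_add_cos_sq z.im]
  refine le_of_sq_le_sq ?_ (norm_nonneg _)
  rw [hsq, hcy]
  have h1 : Real.cos (η / 2) ^ 2 ≤ Real.cos (z.im / 2) ^ 2 := pow_le_pow_left₀ hc.le hc2 2
  have h2 : Real.cos (z.im / 2) ^ 2 ≤ 1 := Real.cos_sq_le_one _
  have h3 := mul_le_mul_of_nonneg_right h1 (sq_nonneg (1 + r))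
  nlinarith [mul_nonneg (sub_nonneg.2 h2) (sq_nonneg (1 - r))]

lemma fermiC_diff (s : ℝ) (hs : 0 < s) (z₀ : ℂ) (hz₀ : |z₀.im| < Real.pi) :
    DifferentiableAt ℂ (fermiC s) z₀ := by
  obtain ⟨η, hη1, hη⟩ := exists_between hz₀
  have h0 := abs_nonneg z₀.im
  have hc : 0 < Real.cos (η / 2) := Real.cos_pos_of_mem_Ioo ⟨by linarith, by linarith⟩
  set c := Real.cos (η / 2) with hcdef
  have hS : {z : ℂ | z.re < z₀.re + 1 ∧ |z.im| < η} ∈ nhds z₀ := by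
    apply IsOpen.mem_nhds
    · exact (isOpen_lt Complex.continuous_re continuous_const).inter
        (isOpen_lt Complex.continuous_im.abs continuous_const)
    · exact ⟨by linarith, hη1⟩
  have hgi := Real.GammaIntegral_convergent hs
  have hne : ∀ (z : ℂ) (t : ℝ), |z.im| < η → Complex.exp (t - z) + 1 ≠ 0 := by
    intro z t hz h
    have := norm_bound (w := t) hη hz
    rw [h, norm_zero] at this
    have : 0 < Real.cos (η / 2) * (1 + Real.exp (t - z.re)) := by positivity
    linarith
  have hmeas : ∀ z : ℂ, AEStronglyMeasurable
      (fun t : ℝ => ((t ^ (s - 1) : ℝ) : ℂ) / (Complex.exp (t - z) + 1))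
      (volume.restrict (Set.Ioi (0 : ℝ))) := fun z =>
    Measurable.aestronglyMeasurable (by fun_prop)
  have key := hasDerivAt_integral_of_dominated_loc_of_deriv_le
    (μ := volume.restrict (Set.Ioi (0 : ℝ))) (x₀ := z₀) (𝕜 := ℂ)
    (F := fun z t => ((t ^ (s - 1) : ℝ) : ℂ) / (Complex.exp (t - z) + 1))
    (F' := fun z t => ((t ^ (s - 1) : ℝ) : ℂ) * Complex.exp (t - z) /
      (Complex.exp (t - z) + 1) ^ 2)
    (bound := fun t => (Real.exp (z₀.re + 1) / c ^ 2) * (Real.exp (-t) * t ^ (s - 1)))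
    hS (Filter.Eventually.of_forall hmeas) ?_ ?_ ?_ (hgi.const_mul _) ?_
  · exact (key.2.differentiableAt).const_mul _
  · refine Integrable.mono' (hgi.const_mul (Real.exp z₀.re / c)) (hmeas z₀) ?_
    filter_upwards [ae_restrict_mem measurableSet_Ioi] with t ht
    have ht0 : (0 : ℝ) < t := ht
    have hb := norm_bound (w := t) hη hη1
    have he := Real.exp_pos (t - z₀.re)
    rw [norm_div, Complex.norm_real, Real.norm_of_nonneg (by positivity)]
    have h1 : c * Real.exp (t - z₀.re) ≤ ‖Complex.exp (t - z₀) + 1‖ := by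
      refine le_trans ?_ hb
      gcongr
      linarith
    calc t ^ (s - 1) / ‖Complex.exp (t - z₀) + 1‖
        ≤ t ^ (s - 1) / (c * Real.exp (t - z₀.re)) := by gcongr
      _ = _ := by
        rw [Real.exp_sub, Real.exp_neg]
        field_simp
  · exact Measurable.aestronglyMeasurable (by fun_prop)
  · filter_upwards [ae_restrict_mem measurableSet_Ioi] with t ht z hz
    have ht0 : (0 : ℝ) < t := ht
    have hb := norm_bound (w := t) hη hz.2
    have he := Real.exp_pos (t - z.re)
    rw [norm_div, norm_mul, norm_pow, Complex.norm_real, Real.norm_of_nonneg (by positivity),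
      Complex.norm_exp, Complex.sub_re, Complex.ofReal_re]
    have h1 : c * Real.exp (t - z.re) ≤ ‖Complex.exp (t - z) + 1‖ := by
      refine le_trans ?_ hb
      gcongr
      linarith
    calc t ^ (s - 1) * Real.exp (t - z.re) / ‖Complex.exp (t - z) + 1‖ ^ 2
        ≤ t ^ (s - 1) * Real.exp (t - z.re) / (c * Real.exp (t - z.re)) ^ 2 := by gcongr
      _ = Real.exp z.re / c ^ 2 * (Real.exp (-t) * t ^ (s - 1)) := by
        rw [Real.exp_sub, Real.exp_neg]
        field_simp
      _ ≤ _ := by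
        have := hz.1.le
        gcongr
  · filter_upwards [ae_restrict_mem measurableSet_Ioi] with t ht z hz
    have h1 : HasDerivAt (fun z : ℂ => Complex.exp (t - z) + 1) (Complex.exp (t - z) * (-1)) z :=
      (((hasDerivAt_id z).const_sub (t : ℂ)).cexp).add_const 1
    have h2 := (hasDerivAt_const z ((t ^ (s - 1) : ℝ) : ℂ)).div h1 (hne z t hz.2)
    refine h2.congr_deriv ?_
    ring

lemma fermiC_analytic (s : ℝ) (hs : 0 < s) :
    AnalyticOnNhd ℂ (fermiC s) {z : ℂ | |z.im| < Real.pi} := by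
  apply DifferentiableOn.analyticOnNhd
  · exact fun z hz => (fermiC_diff s hs z hz).differentiableWithinAt
  · exact isOpen_lt Complex.continuous_im.abs continuous_const

lemma fermi_deriv_aux (s : ℝ) (hs : 0 < s) (k : ℕ) (x : ℝ) :
    HasDerivAt (fun y : ℝ => (iteratedDeriv k (fermiC s) y).re)
      (iteratedDeriv (k + 1) (fermiC s) x).re x := by
  apply HasDerivAt.real_of_complex
  rw [iteratedDeriv_succ]
  apply DifferentiableAt.hasDerivAt
  rw [iteratedDeriv_eq_iterate]
  exact ((fermiC_analytic s hs).iterated_deriv k x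
    (by simp [Real.pi_pos])).differentiableAt

lemma fermi_iteratedDeriv (s : ℝ) (hs : 0 < s) (k : ℕ) :
    iteratedDeriv k (fermi s) = fun x : ℝ => (iteratedDeriv k (fermiC s) x).re := by
  induction k with
  | zero =>
    ext x
    simp [fermiC_ofReal]
  | succ k ih =>
    ext x
    rw [iteratedDeriv_succ, ih]
    exact (fermi_deriv_aux s hs k x).deriv

lemma fermi_contDiff (s : ℝ) (hs : 0 < s) : ContDiff ℝ (⊤ : ℕ∞) (fermi s) := by
  apply contDiff_of_differentiable_iteratedDeriv
  intro m _
  rw [fermi_iteratedDeriv s hs]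
  exact fun x => (fermi_deriv_aux s hs m x).differentiableAt

lemma fermi_taylor (s : ℝ) (hs : 0 < s) (A h : ℝ) (hh : |h| < Real.pi) :
    HasSum (fun k : ℕ => iteratedDeriv k (fermi s) A / (k.factorial : ℝ) * h ^ k)
      (fermi s (A + h)) := by
  have hd : DifferentiableOn ℂ (fermiC s) (Metric.ball (A : ℂ) Real.pi) := by
    intro z hz
    apply (fermiC_diff s hs z _).differentiableWithinAt
    rw [mem_ball_iff_norm] at hz
    have := Complex.abs_im_le_norm (z - A)
    simp at this
    linarith
  have hz : ((A + h : ℝ) : ℂ) ∈ Metric.ball (A : ℂ) Real.pi := by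
    rw [mem_ball_iff_norm]
    simpa using hh
  have := Complex.hasSum_re (Complex.hasSum_taylorSeries_on_ball hd hz)
  rw [fermiC_ofReal, Complex.ofReal_re] at this
  convert this using 2 with k
  have e : ((k.factorial : ℂ)⁻¹ • (((A + h : ℝ) : ℂ) - A) ^ k • iteratedDeriv k (fermiC s) A)
      = (((k.factorial : ℝ)⁻¹ * h ^ k : ℝ) : ℂ) * iteratedDeriv k (fermiC s) A := by
    push_cast
    simp [mul_assoc]
  rw [e, Complex.re_ofReal_mul, fermi_iteratedDeriv s hs]
  ring

/-- `φ_s` is smooth and, for `0 ≤ B < π`,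
`𝓘_N^s(A,B) = Σ_{n≥0} φ_s^{(N+2n)}(A)/(n!(N+n)!) (B/2)^{N+2n}`. -/
theorem calI_series_expansion (s : ℝ) (hs : 0 < s) (N : ℕ) (A B : ℝ)
    (hB : 0 ≤ B) (hBpi : B < Real.pi) :
    ContDiff ℝ (⊤ : ℕ∞) (fermi s) ∧
    HasSum (fun n : ℕ =>
        iteratedDeriv (N + 2 * n) (fermi s) A /
          ((n.factorial : ℝ) * ((N + n).factorial : ℝ)) * (B / 2) ^ (N + 2 * n))
      (calI N s A B) := by
  refine ⟨fermi_contDiff s hs, ?_⟩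
  set d : ℕ → ℝ := fun k => iteratedDeriv k (fermi s) A with hd
  have hB' : |B| < Real.pi := by rwa [abs_of_nonneg hB]
  have hsum := (fermi_taylor s hs A B hB').summable.abs
  have hint : HasSum (fun k : ℕ => ∫ θ in (0 : ℝ)..Real.pi,
      Real.cos (N * θ) * (d k / (k.factorial : ℝ) * (B * Real.cos θ) ^ k))
      (∫ θ in (0 : ℝ)..Real.pi, Real.cos (N * θ) * fermi s (A + B * Real.cos θ)) := by
    apply intervalIntegral.hasSum_integral_of_dominated_convergence
      (fun k _ => |d k / (k.factorial : ℝ) * B ^ k|)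
    · intro k
      exact Continuous.aestronglyMeasurable (by fun_prop)
    · intro k
      refine Filter.Eventually.of_forall fun θ _ => ?_
      rw [Real.norm_eq_abs, mul_pow, abs_mul, ← mul_assoc, abs_mul _ (Real.cos θ ^ k), abs_pow]
      have h1 := Real.abs_cos_le_one (N * θ)
      have h2 : |Real.cos θ| ^ k ≤ 1 := pow_le_one₀ (abs_nonneg _) (Real.abs_cos_le_one θ)
      have h3 := abs_nonneg (d k / (k.factorial : ℝ) * B ^ k)
      calc _ ≤ 1 * (|d k / (k.factorial : ℝ) * B ^ k| * 1) := by gcongr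
        _ = _ := by ring
    · exact Filter.Eventually.of_forall fun θ _ => hsum
    · exact intervalIntegrable_const
    · refine Filter.Eventually.of_forall fun θ _ => ?_
      apply HasSum.mul_left
      apply fermi_taylor s hs
      rw [abs_mul]
      calc _ ≤ |B| * 1 := by gcongr; exact Real.abs_cos_le_one θ
        _ < _ := by linarith
  have hint2 := hint.mul_left (1 / Real.pi)
  have hterm : ∀ k : ℕ, (∫ θ in (0 : ℝ)..Real.pi,
      Real.cos (N * θ) * (d k / (k.factorial : ℝ) * (B * Real.cos θ) ^ k)) =
      d k / (k.factorial : ℝ) * B ^ k *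
        ∫ θ in (0 : ℝ)..Real.pi, Real.cos ((N : ℤ) * θ) * Real.cos θ ^ k := by
    intro k
    rw [← intervalIntegral.integral_const_mul]
    congr 1
    ext θ
    rw [mul_pow]
    push_cast
    ring
  have hinj : Function.Injective (fun n : ℕ => N + 2 * n) := by
    intro a b h
    simp only at h
    omega
  unfold calI
  rw [← hinj.hasSum_iff] at hint2
  · refine Eq.mp (congrArg (fun f => HasSum f _) (funext fun n => Eq.symm ?_)) hint2
    simp only [Function.comp_apply]
    rw [hterm, trig_val (N + 2 * n) N n (by push_cast; ring)]
    have hch := Nat.choose_mul_factorial_mul_factorial (n := N + 2 * n) (k := n) (by omega)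
    rw [show N + 2 * n - n = N + n by omega] at hch
    have hch' : ((N + 2 * n).choose n : ℝ) * n.factorial * (N + n).factorial =
      (N + 2 * n).factorial := by exact_mod_cast hch
    have hf : ((N + 2 * n).choose n : ℝ) ≠ 0 := by
      exact_mod_cast (Nat.choose_pos (by omega)).ne'
    rw [← hch', div_pow]
    have := Real.pi_ne_zero
    have h1 : (n.factorial : ℝ) ≠ 0 := by exact_mod_cast n.factorial_ne_zero
    have h2 : ((N + n).factorial : ℝ) ≠ 0 := by exact_mod_cast (N + n).factorial_ne_zero
    field_simp
    exact mul_comm _ _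
  · intro k hk
    rw [hterm, trig_zero k N]
    · simp
    · intro j hj
      apply hk
      exact ⟨j, by simp only; omega⟩
end

section
/- For every A ∈ ℝ and every b ∈ ℝ² with b ≠ 0: ∫_{ℝ²} ( e^{|p| − b·p/|p| − A} + 1 )^{−1} dp = 2 ∫₀^π φ₂(A + |b| cos θ) dθ, and ∫_{ℝ²} (p/|p|) ( e^{|p| − b·p/|p| − A} + 1 )^{−1} dp = (b/|b|) · 2 ∫₀^π cos θ · φ₂(A + |b| cos θ) dθ. -/
open MeasureTheory Set

/-- The Euclidean norm on `ℝ²`. -/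
noncomputable def nrm (p : ℝ × ℝ) : ℝ := Real.sqrt (p.1 ^ 2 + p.2 ^ 2)

lemma aux_integrable (A D : ℝ) (c d : ℝ → ℝ) (hc : Continuous c) (hd : Continuous d)
    (hc1 : ∀ x, |c x| ≤ 1) (hdD : ∀ x, d x ≤ D) :
    Integrable (fun p : ℝ × ℝ => p.1 * (c p.2 * (Real.exp (p.1 - d p.2 - A) + 1)⁻¹))
      ((volume.restrict (Ioi (0:ℝ))).prod (volume.restrict (Ioo (-Real.pi) Real.pi))) := by
  have h1 : Integrable (fun r : ℝ => Real.exp (-r) * r) (volume.restrict (Ioi (0:ℝ))) := by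
    have h := Real.GammaIntegral_convergent (s := 2) (by norm_num)
    refine (integrableOn_congr_fun (fun r hr => ?_) measurableSet_Ioi).mp h
    norm_num
  have h2 : Integrable (fun _ : ℝ => Real.exp (D + A))
      (volume.restrict (Ioo (-Real.pi) Real.pi)) := by
    exact integrable_const _
  refine (h1.mul_prod h2).mono' ?_ ?_
  · apply Continuous.aestronglyMeasurable
    have : ∀ p : ℝ × ℝ, Real.exp (p.1 - d p.2 - A) + 1 ≠ 0 := fun p => by positivity
    fun_prop (disch := assumption)
  · rw [Measure.prod_restrict]
    refine (ae_restrict_mem (measurableSet_Ioi.prod measurableSet_Ioo)).mono ?_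
    rintro ⟨r, t⟩ ⟨hr, -⟩
    have hr' : 0 < r := hr
    simp only [Real.norm_eq_abs, abs_mul, abs_of_pos hr']
    have e1 : |(Real.exp (r - d t - A) + 1)⁻¹| ≤ Real.exp (-r) * Real.exp (D + A) := by
      rw [abs_of_pos (by positivity), ← Real.exp_add]
      calc (Real.exp (r - d t - A) + 1)⁻¹ ≤ (Real.exp (r - d t - A))⁻¹ := by
            apply inv_anti₀ (by positivity); linarith
        _ = Real.exp (-(r - d t - A)) := (Real.exp_neg _).symm
        _ ≤ _ := by
            apply Real.exp_le_exp.mpr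
            have := hdD t
            linarith
    calc r * (|c t| * |(Real.exp (r - d t - A) + 1)⁻¹|)
        ≤ r * (1 * (Real.exp (-r) * Real.exp (D + A))) := by
          have := hc1 t
          gcongr
      _ = _ := by ring

lemma aux_inner (A x y : ℝ) :
    (∫ r in Ioi (0:ℝ), r * (x * (Real.exp (r - y - A) + 1)⁻¹)) = x * fermi 2 (A + y) := by
  have : Real.Gamma 2 = 1 := by simp
  unfold fermi
  rw [this, div_one, one_mul, ← integral_const_mul]
  refine setIntegral_congr_fun measurableSet_Ioi fun r _ => ?_
  have e : r - y - A = r - (A + y) := by ring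
  have e2 : (2:ℝ) - 1 = 1 := by norm_num
  simp only [e, e2, Real.rpow_one]
  ring

lemma aux_polar (A D : ℝ) (b : ℝ × ℝ) (g : ℝ × ℝ → ℝ) (c d : ℝ → ℝ) (hc : Continuous c)
    (hd : Continuous d) (hc1 : ∀ x, |c x| ≤ 1) (hdD : ∀ x, d x ≤ D)
    (hg : ∀ r t, 0 < r → g (r * Real.cos t, r * Real.sin t) = c t)
    (hbd : ∀ t, b.1 * Real.cos t + b.2 * Real.sin t = d t) :
    (∫ p : ℝ × ℝ, g p * (Real.exp (nrm p - (b.1 * p.1 + b.2 * p.2) / nrm p - A) + 1)⁻¹)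
      = ∫ t in (-Real.pi)..Real.pi, c t * fermi 2 (A + d t) := by
  rw [← integral_comp_polarCoord_symm, polarCoord_target]
  have : ∀ p ∈ Ioi (0:ℝ) ×ˢ Ioo (-Real.pi) Real.pi,
      p.1 • (g (polarCoord.symm p) * (Real.exp (nrm (polarCoord.symm p) -
        (b.1 * (polarCoord.symm p).1 + b.2 * (polarCoord.symm p).2) / nrm (polarCoord.symm p) - A)
        + 1)⁻¹) = p.1 * (c p.2 * (Real.exp (p.1 - d p.2 - A) + 1)⁻¹) := by
    rintro ⟨r, t⟩ ⟨hr, -⟩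
    have hr' : 0 < r := hr
    have hn : nrm (r * Real.cos t, r * Real.sin t) = r := by
      unfold nrm
      rw [show (r * Real.cos t) ^ 2 + (r * Real.sin t) ^ 2
        = r ^ 2 * (Real.sin t ^ 2 + Real.cos t ^ 2) by ring, Real.sin_sq_add_cos_sq, mul_one]
      exact Real.sqrt_sq hr'.le
    simp only [polarCoord_symm_apply, hn, hg r t hr', smul_eq_mul]
    rw [← hbd t]
    congr 6
    field_simp
  rw [setIntegral_congr_fun (measurableSet_Ioi.prod measurableSet_Ioo) this]
  rw [Measure.volume_eq_prod, ← Measure.prod_restrict,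
    integral_prod_symm _ (aux_integrable A D c d hc hd hc1 hdD)]
  simp only [aux_inner]
  rw [intervalIntegral.integral_of_le (by linarith [Real.pi_pos]), integral_Ioc_eq_integral_Ioo]

lemma aux_fermi_int (A B : ℝ) :
    IntervalIntegrable (fun t => fermi 2 (A + B * Real.cos t)) volume (-Real.pi) Real.pi := by
  have h := (aux_integrable A |B| (fun _ => 1) (fun t => B * Real.cos t) (by fun_prop)
    (by fun_prop) (by simp) (fun t => ?_)).integral_prod_right
  · simp only [aux_inner] at h
    simp only [one_mul] at h
    rw [intervalIntegrable_iff_integrableOn_Ioo_of_le (by linarith [Real.pi_pos])]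
    exact h
  · calc B * Real.cos t ≤ |B * Real.cos t| := le_abs_self _
      _ = |B| * |Real.cos t| := abs_mul _ _
      _ ≤ |B| * 1 := by gcongr; exact Real.abs_cos_le_one t
      _ = |B| := mul_one _

lemma aux_fold (h : ℝ → ℝ) (hi : IntervalIntegrable h volume (-Real.pi) Real.pi) :
    (∫ t in (-Real.pi)..Real.pi, h t) = ∫ t in (0:ℝ)..Real.pi, (h (-t) + h t) := by
  have hp := Real.pi_pos
  have i1 : IntervalIntegrable h volume (-Real.pi) 0 := hi.mono_set (by
    rw [uIcc_of_le (by linarith), uIcc_of_le (by linarith)]; exact Icc_subset_Icc le_rfl hp.le)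
  have i2 : IntervalIntegrable h volume 0 Real.pi := hi.mono_set (by
    rw [uIcc_of_le (by linarith), uIcc_of_le (by linarith)]
    exact Icc_subset_Icc (by linarith) le_rfl)
  have i3 : IntervalIntegrable (fun t => h (-t)) volume 0 Real.pi := by
    rw [IntervalIntegrable.iff_comp_neg]
    simpa using i1.symm
  rw [intervalIntegral.integral_add i3 i2, intervalIntegral.integral_comp_neg, neg_zero,
    intervalIntegral.integral_add_adjacent_intervals i1 i2]

lemma aux_shift (h : ℝ → ℝ) (hp : Function.Periodic h (2 * Real.pi)) (α : ℝ) :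
    (∫ t in (-Real.pi)..Real.pi, h t) = ∫ t in (-Real.pi)..Real.pi, h (t + α) := by
  rw [intervalIntegral.integral_comp_add_right]
  have := hp.intervalIntegral_add_eq (-Real.pi) (-Real.pi + α)
  convert this using 2 <;> ring

/-- Moment with angular weight `cos (t - β)`-type function. -/
lemma aux_main (A B α : ℝ) (c : ℝ → ℝ) (hc : Continuous c)
    (hcp : Function.Periodic c (2 * Real.pi)) (k : ℝ) (e : ℝ → ℝ)
    (hk : ∀ t, c (-t + α) + c (t + α) = k * e t) :
    (∫ t in (-Real.pi)..Real.pi, c t * fermi 2 (A + B * Real.cos (t - α)))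
      = k * ∫ t in (0:ℝ)..Real.pi, e t * fermi 2 (A + B * Real.cos t) := by
  rw [aux_shift _ _ α]
  · simp only [add_sub_cancel_right]
    rw [aux_fold, ← intervalIntegral.integral_const_mul]
    · refine intervalIntegral.integral_congr fun t _ => ?_
      simp only [Real.cos_neg]
      rw [← add_mul, hk, mul_assoc]
    · exact (aux_fermi_int A B).continuousOn_mul (by fun_prop)
  · intro t
    simp only [hcp t]
    rw [show t + 2 * Real.pi - α = (t - α) + 2 * Real.pi by ring, Real.cos_add_two_pi]

/-- Reduction of the moments of the Fermi-Dirac equilibrium to Fermi integrals: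
`∫_{ℝ²} (e^{|p|-b·p/|p|-A}+1)^{-1} dp = 2∫₀^π φ₂(A+|b|cosθ)dθ` and
`∫_{ℝ²} (p/|p|)(e^{|p|-b·p/|p|-A}+1)^{-1} dp = (b/|b|)·2∫₀^π cosθ φ₂(A+|b|cosθ)dθ`. -/
theorem equilibrium_moments (A : ℝ) (b : ℝ × ℝ) (hb : b ≠ 0) :
    (∫ p : ℝ × ℝ,
        (Real.exp (nrm p - (b.1 * p.1 + b.2 * p.2) / nrm p - A) + 1)⁻¹)
      = 2 * ∫ θ in (0 : ℝ)..Real.pi, fermi 2 (A + nrm b * Real.cos θ) ∧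
    (∫ p : ℝ × ℝ, (p.1 / nrm p) *
        (Real.exp (nrm p - (b.1 * p.1 + b.2 * p.2) / nrm p - A) + 1)⁻¹)
      = (b.1 / nrm b) *
          (2 * ∫ θ in (0 : ℝ)..Real.pi, Real.cos θ * fermi 2 (A + nrm b * Real.cos θ)) ∧
    (∫ p : ℝ × ℝ, (p.2 / nrm p) *
        (Real.exp (nrm p - (b.1 * p.1 + b.2 * p.2) / nrm p - A) + 1)⁻¹)
      = (b.2 / nrm b) *
          (2 * ∫ θ in (0 : ℝ)..Real.pi, Real.cos θ * fermi 2 (A + nrm b * Real.cos θ)) := by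
  set B := nrm b with hB
  obtain ⟨α, h1, h2⟩ : ∃ α : ℝ, b.1 = B * Real.cos α ∧ b.2 = B * Real.sin α := by
    refine ⟨Complex.arg ⟨b.1, b.2⟩, ?_, ?_⟩
    · have := Complex.norm_mul_cos_arg ⟨b.1, b.2⟩
      rw [Complex.norm_eq_sqrt_sq_add_sq] at this
      exact this.symm
    · have := Complex.norm_mul_sin_arg ⟨b.1, b.2⟩
      rw [Complex.norm_eq_sqrt_sq_add_sq] at this
      exact this.symm
  have hB0 : B ≠ 0 := by
    intro h0
    apply hb
    ext
    · simp [h1, h0]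
    · simp [h2, h0]
  have hBn : 0 ≤ B := Real.sqrt_nonneg _
  have hnr : ∀ r t, 0 < r → nrm (r * Real.cos t, r * Real.sin t) = r := by
    intro r t hr
    unfold nrm
    rw [show (r * Real.cos t) ^ 2 + (r * Real.sin t) ^ 2
      = r ^ 2 * (Real.sin t ^ 2 + Real.cos t ^ 2) by ring, Real.sin_sq_add_cos_sq, mul_one]
    exact Real.sqrt_sq hr.le
  have hdD : ∀ t, B * Real.cos (t - α) ≤ B := fun t => by
    nlinarith [Real.cos_le_one (t - α)]
  have hbd : ∀ t, b.1 * Real.cos t + b.2 * Real.sin t = B * Real.cos (t - α) := fun t => by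
    rw [h1, h2, Real.cos_sub]; ring
  have hd : Continuous fun t => B * Real.cos (t - α) := by fun_prop
  refine ⟨?_, ?_, ?_⟩
  · have := aux_polar A B b (fun _ => 1) (fun _ => 1) _ (by fun_prop) hd (by simp) hdD
      (by simp) hbd
    rw [aux_main A B α (fun _ => 1) (by fun_prop) (fun _ => rfl) 2 (fun _ => 1)
      (by intro t; norm_num)] at this
    simpa only [one_mul] using this
  · have := aux_polar A B b (fun p => p.1 / nrm p) Real.cos _ (by fun_prop) hd
      Real.abs_cos_le_one hdD (by intro r t hr; simp only [hnr r t hr]; field_simp) hbd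
    rw [this, aux_main A B α Real.cos (by fun_prop) Real.cos_periodic (2 * Real.cos α) Real.cos
      (by intro t; simp only [Real.cos_add, Real.cos_neg, Real.sin_neg]; ring), h1, mul_div_cancel_left₀ _ hB0]
    ring
  · have := aux_polar A B b (fun p => p.2 / nrm p) Real.sin _ (by fun_prop) hd
      Real.abs_sin_le_one hdD (by intro r t hr; simp only [hnr r t hr]; field_simp) hbd
    rw [this, aux_main A B α Real.sin (by fun_prop) Real.sin_periodic (2 * Real.sin α) Real.cos
      (by intro t; simp only [Real.sin_add, Real.cos_neg, Real.sin_neg]; ring), h2, mul_div_cancel_left₀ _ hB0]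
    ring
end
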